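/- arXiv:0705.3424 — 2 statements merged into one kernel-verified Lean document; each statement's English description precedes it below -/
import Mathlib

section
/- For every k ≥ 2, a tuple (x_1,…,x_k) ∈ X^k not lying in the diagonal Δ_k(X) = {(x,…,x) : x ∈ X} is a μ-IE-tuple if and only if it is a μ-entropy tuple. -/
open MeasureTheory Set
open scoped Classical ENNReal

/-- `F` is a nonempty `(K,δ)`-invariant finite subset of the group `G`. -/
def FolnerInv {G : Type*} [Group G] (K : Finset G) (δ : ℝ) (F : Finset G) : Prop :=
  F.Nonempty ∧
    (1 - δ) * (F.card : ℝ) ≤ (((F : Set G)) ∩ {s : G | ∀ g ∈ K, g * s ∈ F}).ncard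

/-- The Følner characterisation of amenability for a discrete group `G`. -/
def FolnerAmenable (G : Type*) [Group G] : Prop :=
  ∀ (K : Finset G) (δ : ℝ), 0 < δ → ∃ F : Finset G, FolnerInv K δ F

/-- The limit supremum of `ψ F / |F|` as `F` becomes more and more invariant. -/
noncomputable def invLimsup {G : Type*} [Group G] (ψ : Finset G → ℝ) : ℝ :=
  ⨅ (K : Finset G) (δ : {d : ℝ // 0 < d}),
    sSup ((fun F : Finset G => ψ F / (F.card : ℝ)) '' {F : Finset G | FolnerInv K δ.1 F})

/-- The limit infimum of `ψ F / |F|` as `F` becomes more and more invariant. -/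
noncomputable def invLiminf {G : Type*} [Group G] (ψ : Finset G → ℝ) : ℝ :=
  ⨆ (K : Finset G) (δ : {d : ℝ // 0 < d}),
    sInf ((fun F : Finset G => ψ F / (F.card : ℝ)) '' {F : Finset G | FolnerInv K δ.1 F})

/-- `J ⊆ G` is an independence set for the tuple `A` of subsets of `X` relative to the
map `D : G → Set X`. -/
def IndepRel {G X : Type*} [Group G] [MulAction G X] {k : ℕ} (A : Fin k → Set X)
    (D : G → Set X) (J : Set G) : Prop :=
  ∀ F : Finset G, (F : Set G) ⊆ J → F.Nonempty → ∀ σ : G → Fin k,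
    (⋂ s ∈ F, (D s ∩ (fun x => s • x) ⁻¹' A (σ s))).Nonempty

/-- `J ⊆ G` is an independence set for the tuple `A` relative to the subset `D ⊆ X`. -/
def IndepSet {G X : Type*} [Group G] [MulAction G X] {k : ℕ} (A : Fin k → Set X)
    (D : Set X) (J : Set G) : Prop :=
  IndepRel A (fun _ => D) J

/-- The maximum of `|F ∩ J|` over independence sets `J` for `A` relative to `D`. -/
noncomputable def maxIndep {G X : Type*} [Group G] [MulAction G X] {k : ℕ}
    (A : Fin k → Set X) (D : G → Set X) (F : Finset G) : ℕ :=
  sSup {m : ℕ | ∃ J : Set G, IndepRel A D J ∧ m = (((F : Set G)) ∩ J).ncard}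

/-- `φ_{A,δ}(F)`: the minimum over Borel sets `D` with `μ(D) ≥ 1 - δ` of the maximum
of `|F ∩ J|` over independence sets `J` for `A` relative to `D`. -/
noncomputable def phiConst {G X : Type*} [Group G] [MulAction G X] [MeasurableSpace X]
    (μ : Measure X) {k : ℕ} (A : Fin k → Set X) (δ : ℝ) (F : Finset G) : ℕ :=
  sInf {m : ℕ | ∃ D : Set X, MeasurableSet D ∧ 1 - δ ≤ (μ D).toReal ∧
    m = maxIndep A (fun _ : G => D) F}

/-- `φ'_{A,δ}(F)`: as `phiConst` but with maps `D : G → Set X` with `μ(D s) ≥ 1 - δ`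
for all `s`. -/
noncomputable def phiMap {G X : Type*} [Group G] [MulAction G X] [MeasurableSpace X]
    (μ : Measure X) {k : ℕ} (A : Fin k → Set X) (δ : ℝ) (F : Finset G) : ℕ :=
  sInf {m : ℕ | ∃ D : G → Set X, (∀ s, MeasurableSet (D s)) ∧
    (∀ s, 1 - δ ≤ (μ (D s)).toReal) ∧ m = maxIndep A D F}

/-- The upper `μ`-independence density `Ī_μ(A)` of the tuple `A`. -/
noncomputable def upperIndepDens (G : Type*) {X : Type*} [Group G] [MulAction G X]
    [MeasurableSpace X] (μ : Measure X) {k : ℕ} (A : Fin k → Set X) : ℝ :=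
  ⨆ δ : {d : ℝ // 0 < d}, invLimsup (fun F : Finset G => (phiConst μ A δ.1 F : ℝ))

/-- The lower `μ`-independence density `I̲_μ(A)` of the tuple `A`. -/
noncomputable def lowerIndepDens (G : Type*) {X : Type*} [Group G] [MulAction G X]
    [MeasurableSpace X] (μ : Measure X) {k : ℕ} (A : Fin k → Set X) : ℝ :=
  ⨆ δ : {d : ℝ // 0 < d}, invLiminf (fun F : Finset G => (phiConst μ A δ.1 F : ℝ))

/-- The measure `μ` is invariant under the action of `G`. -/
def InvariantMeasure (G : Type*) {X : Type*} [Group G] [MulAction G X] [MeasurableSpace X]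
    (μ : Measure X) : Prop :=
  ∀ (s : G) (B : Set X), MeasurableSet B → μ ((fun x => s • x) ⁻¹' B) = μ B

/-- The entropy `H_μ(𝒫^F)` of the join `⋁_{s ∈ F} s⁻¹𝒫` of the finite partition `P`. -/
noncomputable def HJoin {G X : Type*} [Group G] [MulAction G X] [MeasurableSpace X]
    (μ : Measure X) {k : ℕ} (P : Fin k → Set X) (F : Finset G) : ℝ :=
  ∑ f : ↥F → Fin k,
    Real.negMulLog (μ (⋂ s : ↥F, (fun x => (s : G) • x) ⁻¹' P (f s))).toReal

/-- `P` is a finite measurable partition of `X` (members may be empty). -/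
def IsMeasPartition {X : Type*} [MeasurableSpace X] {k : ℕ} (P : Fin k → Set X) : Prop :=
  (∀ i, MeasurableSet (P i)) ∧ (Pairwise fun i j => Disjoint (P i) (P j)) ∧
    (⋃ i, P i) = Set.univ

/-- `x` is a (topological) IE-tuple for the action of `G` on `X`. -/
def IsIETuple (G : Type*) {X : Type*} [Group G] [TopologicalSpace X] [MulAction G X]
    {k : ℕ} (x : Fin k → X) : Prop :=
  ∀ U : Fin k → Set X, (∀ i, U i ∈ nhds (x i)) →
    ∃ d : ℝ, 0 < d ∧ ∀ (K : Finset G) (δ : ℝ), 0 < δ →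
      ∃ (F : Finset G) (J : Set G), FolnerInv K δ F ∧ IndepSet U (Set.univ : Set X) J ∧
        d * (F.card : ℝ) ≤ (((F : Set G)) ∩ J).ncard

/-- `x` is a `μ`-IE-tuple. -/
def IsMuIETuple (G : Type*) {X : Type*} [Group G] [TopologicalSpace X] [MulAction G X]
    [MeasurableSpace X] (μ : Measure X) {k : ℕ} (x : Fin k → X) : Prop :=
  ∀ U : Fin k → Set X, (∀ i, U i ∈ nhds (x i)) → 0 < upperIndepDens G μ U

/-- The defining property of a `μ`-entropy tuple: whenever `U₁, …, U_l` are pairwise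
disjoint Borel neighbourhoods of the distinct points in the list `x₁, …, x_k`, every
finite Borel partition of `X` refining the cover `{U₁ᶜ, …, U_lᶜ}` has positive measure
entropy. -/
def MuEntropyTupleProp (G : Type*) {X : Type*} [Group G] [TopologicalSpace X]
    [MulAction G X] [MeasurableSpace X] (μ : Measure X) {k : ℕ} (x : Fin k → X) : Prop :=
  ∀ (l : ℕ) (z : Fin l → X) (U : Fin l → Set X),
    Function.Injective z → Set.range z = Set.range x →
    (∀ j, U j ∈ nhds (z j)) → (∀ j, MeasurableSet (U j)) →
    (Pairwise fun i j => Disjoint (U i) (U j)) →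
    ∀ (r : ℕ) (P : Fin r → Set X), IsMeasPartition P → (∀ a, ∃ j, P a ⊆ (U j)ᶜ) →
      0 < invLimsup (fun F : Finset G => HJoin μ P F)

/-!
Suppose that `U` has positive upper independence density and that each atom of `𝒫` misses some
`U j`. Over an independence set `J` relative to `D` all `l ^ |J|` itineraries through `U` occur
in `D`, whereas the points with a given `𝒫`-name have at most `(l - 1) ^ |J|` of them; so no set
`D` of measure at least `1 - δ` is covered by few names, and `𝒫` has positive entropy.

Suppose conversely that `U` is a disjoint family of density zero. On a set `D` of nearly full
measure the itineraries over a suitable tile `F` shatter only small subsets of `F`, so by a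
Sauer–Shelah argument they are avoided by a code of only `exp (c * |F|)` words, that is, every
itinerary differs at every site from some codeword. Averaging over the translates of `F` through a
point the letters which the codewords predict there gives a map into the standard simplex whose
`j`-th coordinate nearly vanishes on `U j`. By sampling few of the translates at random, its values
along a large Følner set are predicted up to a small mean error by a code of small rate. Convexity
and the parallelogram law in `L²` then produce a partition of unity `w` with `w j = 0` on `U j`
and with codes of arbitrarily small rate and error. Assigning to `x` some `j` with `w x j > a`, for
a level `a < 1 / l` which almost surely no coordinate attains, gives a partition subordinate to the
sets `(U j)ᶜ`; by Gibbs' inequality relative to a noisy version of these codes it has entropy zero.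
-/

section Combinatorics

variable {α ι : Type*} {S S' : Set (α → Option ι)} {Z Z' J : Finset α}

/-- A class `S` of partial `ι`-valued functions shatters `J` if every `ι`-valued pattern on `J` is
realised by a member of `S`. -/
def ShattersPartial (S : Set (α → Option ι)) (J : Finset α) : Prop :=
  ∀ σ : α → ι, ∃ ω ∈ S, ∀ s ∈ J, ω s = some (σ s)

/-- The subsets of `Z` shattered by `S`. -/
noncomputable def shatteredSets (S : Set (α → Option ι)) (Z : Finset α) : Finset (Finset α) :=
  Z.powerset.filter (ShattersPartial S)

/-- A finite set `T` of total functions such that each partial function in `S` differs from some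
member of `T` at every point of `Z`. -/
def AvoidingCover (S : Set (α → Option ι)) (Z : Finset α) (T : Finset (α → ι)) : Prop :=
  ∀ ω ∈ S, ∃ τ ∈ T, ∀ s ∈ Z, ω s ≠ some (τ s)

lemma mem_shatteredSets : J ∈ shatteredSets S Z ↔ J ⊆ Z ∧ ShattersPartial S J := by
  simp [shatteredSets]

lemma ShattersPartial.mono (h : ShattersPartial S J) (hS : S ⊆ S') : ShattersPartial S' J :=
  fun σ ↦ (h σ).imp fun _ hω ↦ ⟨hS hω.1, hω.2⟩

lemma shatteredSets_mono (hS : S ⊆ S') (hZ : Z ⊆ Z') :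
    shatteredSets S Z ⊆ shatteredSets S' Z' := fun _ hJ ↦
  mem_shatteredSets.2 ((mem_shatteredSets.1 hJ).imp hZ.trans' (·.mono hS))

lemma ShattersPartial.insert_of_fibres {a : α}
    (h : ∀ i, ShattersPartial {ω ∈ S | ω a = some i} J) : ShattersPartial S (insert a J) := by
  intro σ
  obtain ⟨ω, ⟨hωS, hωa⟩, hωJ⟩ := h (σ a) σ
  exact ⟨ω, hωS, Finset.forall_mem_insert .. |>.2 ⟨hωa, hωJ⟩⟩

/-- Adding `a` to the sets shattered by every fibre over `a` produces new shattered sets. -/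
lemma card_shatteredSets_add_card_le {W : Finset (Finset α)} {a : α} (ha : a ∉ Z)
    (hWZ : W ⊆ shatteredSets S Z)
    (hW : ∀ J ∈ W, ∀ i, J ∈ shatteredSets {ω ∈ S | ω a = some i} Z) :
    (shatteredSets S Z).card + W.card ≤ (shatteredSets S (insert a Z)).card := by
  have subset_of_mem : ∀ J ∈ shatteredSets S Z, J ⊆ Z := fun J hJ ↦ (mem_shatteredSets.1 hJ).1
  have hdisj : Disjoint (shatteredSets S Z) (W.image (insert a)) := by
    simp only [Finset.disjoint_right, Finset.forall_mem_image]
    exact fun J _ hJ ↦ ha (subset_of_mem _ hJ (Finset.mem_insert_self a J))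
  have hinj : (W : Set (Finset α)).InjOn (insert a) := fun J hJ J' hJ' h ↦ by
    rw [← Finset.erase_insert fun h ↦ ha (subset_of_mem J (hWZ hJ) h),
      ← Finset.erase_insert fun h ↦ ha (subset_of_mem J' (hWZ hJ') h), h]
  rw [← Finset.card_image_of_injOn hinj, ← Finset.card_union_of_disjoint hdisj]
  refine Finset.card_le_card (Finset.union_subset
    (shatteredSets_mono subset_rfl (Finset.subset_insert a Z)) ?_)
  exact Finset.forall_mem_image.2 fun J hJ ↦ mem_shatteredSets.2
    ⟨Finset.insert_subset_insert a (subset_of_mem J (hWZ hJ)),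
      .insert_of_fibres fun i ↦ (mem_shatteredSets.1 (hW J hJ i)).2⟩

lemma AvoidingCover.insert_of_fibres {T₁ T₂ : Finset (α → ι)} {a : α} {i i' : ι} (hne : i ≠ i')
    (h₁ : AvoidingCover {ω ∈ S | ω a ≠ some i} Z T₁)
    (h₂ : AvoidingCover {ω ∈ S | ω a = some i} Z T₂) :
    AvoidingCover S (insert a Z) (T₁.image (Function.update · a i) ∪
      T₂.image (Function.update · a i')) := by
  have update_avoids {ω : α → Option ι} {τ : α → ι} {b : ι} (hτ : ∀ s ∈ Z, ω s ≠ some (τ s))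
      (hb : ω a ≠ some b) : ∀ s ∈ insert a Z, ω s ≠ some (Function.update τ a b s) := by
    intro s hs
    obtain rfl | hsa := eq_or_ne s a
    · simpa using hb
    · simpa [hsa] using hτ s (Finset.mem_of_mem_insert_of_ne hs hsa)
  intro ω hω
  by_cases hωa : ω a = some i
  · obtain ⟨τ, hτ, hav⟩ := h₂ ω ⟨hω, hωa⟩
    exact ⟨_, Finset.mem_union_right _ (Finset.mem_image_of_mem _ hτ),
      update_avoids hav (by simpa [hωa] using hne)⟩
  · obtain ⟨τ, hτ, hav⟩ := h₁ ω ⟨hω, hωa⟩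
    exact ⟨_, Finset.mem_union_left _ (Finset.mem_image_of_mem _ hτ), update_avoids hav hωa⟩

lemma exists_avoidingCover_empty [Nonempty ι] (S : Set (α → Option ι)) :
    ∃ T, AvoidingCover S ∅ T ∧ T.card ≤ (shatteredSets S ∅).card := by
  rcases S.eq_empty_or_nonempty with rfl | ⟨ω, hω⟩
  · exact ⟨∅, by simp [AvoidingCover], by simp⟩
  · have hmem : ∅ ∈ shatteredSets S ∅ :=
      mem_shatteredSets.2 ⟨subset_rfl, fun _ ↦ ⟨ω, hω, by simp⟩⟩
    exact ⟨{fun _ ↦ Classical.arbitrary ι}, by simp [AvoidingCover],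
      Finset.card_pos.2 ⟨∅, hmem⟩⟩

variable [Fintype ι]

lemma sum_card_le_card_add {β : Type*} {Q W : Finset β} {I : ι → Finset β} (hI : ∀ i, I i ⊆ Q)
    (hW : ∀ J ∈ Q, (∀ i, J ∈ I i) → J ∈ W) :
    ∑ i, (I i).card ≤ W.card + (Fintype.card ι - 1) * Q.card := by
  have hcount : ∑ i, (I i).card = ∑ J ∈ Q, (Finset.univ.filter fun i ↦ J ∈ I i).card := by
    refine Eq.trans ?_ (Finset.sum_card_bipartiteAbove_eq_sum_card_bipartiteBelow
      fun i J ↦ J ∈ I i)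
    refine Finset.sum_congr rfl fun i _ ↦ congrArg Finset.card ?_
    rw [Finset.bipartiteAbove, Finset.filter_mem_eq_inter, Finset.inter_eq_right.2 (hI i)]
  have hQW : (Q.filter (· ∈ W)).card ≤ W.card :=
    Finset.card_le_card fun _ hJ ↦ (Finset.mem_filter.1 hJ).2
  grw [hcount, ← hQW]
  rw [Finset.card_filter, mul_comm, ← smul_eq_mul, ← Finset.sum_const, ← Finset.sum_add_distrib]
  refine Finset.sum_le_sum fun J hJ ↦ ?_
  split_ifs with hJW
  · have := Finset.card_le_univ (Finset.univ.filter fun i ↦ J ∈ I i)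
    lia
  · obtain ⟨i, hi⟩ := not_forall.1 (mt (hW J hJ) hJW)
    have : (Finset.univ.filter fun i ↦ J ∈ I i).card < Fintype.card ι :=
      Finset.card_lt_univ_of_notMem (x := i) (by simpa using hi)
    lia

variable [Nontrivial ι]

lemma sum_card_shatteredSets_fibre_le {a : α} (ha : a ∉ Z) :
    ∑ i, (shatteredSets {ω ∈ S | ω a = some i} Z).card ≤
      (Fintype.card ι - 1) * (shatteredSets S (insert a Z)).card := by
  set W := (shatteredSets S Z).filter
    fun J ↦ ∀ i, J ∈ shatteredSets {ω ∈ S | ω a = some i} Z with hW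
  have hfibre := sum_card_le_card_add (W := W)
    (fun i ↦ shatteredSets_mono (Set.sep_subset S (· a = some i)) (subset_refl Z))
    fun J hJ hJ' ↦ Finset.mem_filter.2 ⟨hJ, hJ'⟩
  have hinsert := card_shatteredSets_add_card_le ha (Finset.filter_subset _ _)
    fun J hJ ↦ (Finset.mem_filter.1 (hW ▸ hJ)).2
  obtain ⟨m, hm⟩ := Nat.exists_eq_add_of_lt (Fintype.one_lt_card (α := ι))
  rw [hm] at hfibre ⊢
  simp only [Nat.add_sub_cancel, add_mul, one_mul] at hfibre ⊢
  have := Nat.mul_le_mul_left m ((Nat.le_add_right _ _).trans hinsert)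
  lia

lemma exists_card_shatteredSets_fibre_le (S : Set (α → Option ι)) {a : α} (ha : a ∉ Z) :
    ∃ i, ((shatteredSets {ω ∈ S | ω a = some i} Z).card : ℝ) ≤
      (1 - (Fintype.card ι : ℝ)⁻¹) * (shatteredSets S (insert a Z)).card := by
  have hsum := sum_card_shatteredSets_fibre_le (S := S) ha
  have hcard : (0 : ℝ) < Fintype.card ι := by exact_mod_cast Fintype.card_pos
  obtain ⟨i, -, hi⟩ := Finset.exists_le_of_sum_le (Finset.univ_nonempty (α := ι))
    (f := fun i ↦ ((shatteredSets {ω ∈ S | ω a = some i} Z).card : ℝ))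
    (g := fun _ ↦ (1 - (Fintype.card ι : ℝ)⁻¹) * (shatteredSets S (insert a Z)).card) <| by
      rw [Finset.sum_const, Finset.card_univ, nsmul_eq_mul, ← mul_assoc, mul_sub,
        mul_inv_cancel₀ hcard.ne', mul_one]
      have := (Nat.cast_le (α := ℝ)).2 hsum
      rwa [Nat.cast_sum, Nat.cast_mul, Nat.cast_pred Fintype.card_pos] at this
  exact ⟨i, hi⟩

/-- The larger `p`, the smaller the exponential factor; the price is a power of the number of
shattered sets. -/
lemma exists_avoidingCover_card_le (p : ℕ) (hp : p ≠ 0) (Z : Finset α) (S : Set (α → Option ι)) :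
    ∃ T, AvoidingCover S Z T ∧
      (T.card : ℝ) ≤ (1 + (1 - (Fintype.card ι : ℝ)⁻¹) ^ p) ^ Z.card *
        (shatteredSets S Z).card ^ p := by
  set ρ : ℝ := 1 - (Fintype.card ι : ℝ)⁻¹
  have hρ : 0 ≤ ρ := sub_nonneg.2 (Nat.cast_inv_le_one _)
  induction Z using Finset.induction_on generalizing S with
  | empty =>
    obtain ⟨T, hT, hcard⟩ := exists_avoidingCover_empty S
    refine ⟨T, hT, ?_⟩
    rw [Finset.card_empty, pow_zero, one_mul]
    exact_mod_cast hcard.trans (Nat.le_self_pow hp _)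
  | insert a Z ha ih =>
    obtain ⟨i, hi⟩ := exists_card_shatteredSets_fibre_le S ha
    obtain ⟨i', hi'⟩ := exists_ne i
    obtain ⟨T₁, hT₁, hcard₁⟩ := ih {ω ∈ S | ω a ≠ some i}
    obtain ⟨T₂, hT₂, hcard₂⟩ := ih {ω ∈ S | ω a = some i}
    refine ⟨_, hT₁.insert_of_fibres hi'.symm hT₂, ?_⟩
    set v : ℝ := ((shatteredSets S (insert a Z)).card : ℝ)
    have hi₁ : ((shatteredSets {ω ∈ S | ω a ≠ some i} Z).card : ℝ) ≤ v :=
      Nat.cast_le.2 <| Finset.card_le_card <|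
        shatteredSets_mono (Set.sep_subset _ _) (Finset.subset_insert a Z)
    calc _ ≤ (T₁.card : ℝ) + T₂.card := by
          exact_mod_cast (Finset.card_union_le _ _).trans
            (add_le_add Finset.card_image_le Finset.card_image_le)
      _ ≤ (1 + ρ ^ p) ^ Z.card * v ^ p + (1 + ρ ^ p) ^ Z.card * (ρ * v) ^ p := by
          grw [hcard₁, hcard₂, hi₁, hi]
      _ = _ := by
          rw [Finset.card_insert_of_notMem ha, pow_succ, mul_pow]
          ring

lemma card_le_exp_of_forall_card_le {𝒥 : Finset (Finset α)} {y η : ℝ} (hy₀ : 0 < y)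
    (hy₁ : y ≤ 1) (hsub : 𝒥 ⊆ Z.powerset) (hη : ∀ J ∈ 𝒥, (J.card : ℝ) ≤ η * Z.card) :
    (𝒥.card : ℝ) ≤ Real.exp (Z.card * (y - η * Real.log y)) := by
  have one_le (J) (hJ : J ∈ 𝒥) :
      1 ≤ Real.exp (-(Z.card * (η * Real.log y))) * (y ^ J.card * 1 ^ (Z.card - J.card)) := by
    rw [one_pow, mul_one, ← Real.exp_log (pow_pos hy₀ _), Real.log_pow, ← Real.exp_add,
      Real.one_le_exp_iff]
    nlinarith [mul_le_mul_of_nonpos_right (hη J hJ) (Real.log_nonpos hy₀.le hy₁)]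
  calc (𝒥.card : ℝ) = ∑ _J ∈ 𝒥, (1 : ℝ) := by simp
    _ ≤ ∑ J ∈ Z.powerset,
        Real.exp (-(Z.card * (η * Real.log y))) * (y ^ J.card * 1 ^ (Z.card - J.card)) :=
      (Finset.sum_le_sum one_le).trans <|
        Finset.sum_le_sum_of_subset_of_nonneg hsub fun _ _ _ ↦ by positivity
    _ = Real.exp (-(Z.card * (η * Real.log y))) * (y + 1) ^ Z.card := by
      rw [← Finset.mul_sum, Finset.sum_pow_mul_eq_add_pow]
    _ ≤ Real.exp (-(Z.card * (η * Real.log y))) * Real.exp y ^ Z.card := by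
      gcongr
      exact Real.add_one_le_exp y
    _ = _ := by
      rw [← Real.exp_nat_mul, ← Real.exp_add]
      congr 1
      ring

lemma exists_pow_add_mul_sub_log_le {ρ c : ℝ} (hρ₀ : 0 ≤ ρ) (hρ₁ : ρ < 1) (hc : 0 < c) :
    ∃ p : ℕ, p ≠ 0 ∧ ∃ y ∈ Ioc (0 : ℝ) 1, ∃ η > 0, ρ ^ p + p * (y - η * Real.log y) ≤ c := by
  obtain ⟨p, hpc⟩ := exists_pow_lt_of_lt_one hc hρ₁
  have hp : ρ ^ (p + 1) < c := (pow_le_pow_of_le_one hρ₀ hρ₁.le p.le_succ).trans_lt hpc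
  have hy : ∀ᶠ y : ℝ in nhdsWithin 0 (Ioi 0), ρ ^ (p + 1) + (p + 1 : ℕ) * y < c :=
    (Continuous.tendsto' (by fun_prop) 0 _ rfl).eventually_lt_const (by simpa using hp)
      |>.filter_mono nhdsWithin_le_nhds
  obtain ⟨y, hyc, hy⟩ := (hy.and (Ioc_mem_nhdsGT one_pos)).exists
  have hη : ∀ᶠ η : ℝ in nhdsWithin 0 (Ioi 0),
      ρ ^ (p + 1) + (p + 1 : ℕ) * (y - η * Real.log y) < c :=
    (Continuous.tendsto' (by fun_prop) 0 _ rfl).eventually_lt_const (by simpa using hyc)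
      |>.filter_mono nhdsWithin_le_nhds
  obtain ⟨η, hηc, hη⟩ := (hη.and self_mem_nhdsWithin).exists
  exact ⟨p + 1, p.succ_ne_zero, y, hy, η, hη, hηc.le⟩

lemma exists_avoidingCover_card_le_exp (ι : Type*) [Finite ι] [Nontrivial ι] {c : ℝ} (hc : 0 < c) :
    ∃ η > 0, ∀ {α : Type*} (Z : Finset α) (S : Set (α → Option ι)),
      (∀ J ⊆ Z, ShattersPartial S J → (J.card : ℝ) ≤ η * Z.card) →
      ∃ T, AvoidingCover S Z T ∧ (T.card : ℝ) ≤ Real.exp (c * Z.card) := by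
  have := Fintype.ofFinite ι
  set ρ : ℝ := 1 - (Fintype.card ι : ℝ)⁻¹
  have hρ₀ : 0 ≤ ρ := sub_nonneg.2 (Nat.cast_inv_le_one _)
  have hρ₁ : ρ < 1 := sub_lt_self 1 (by simp [Fintype.card_pos])
  obtain ⟨p, hp, y, hy, η, hη, hsum⟩ := exists_pow_add_mul_sub_log_le hρ₀ hρ₁ hc
  refine ⟨η, hη, fun Z S hS ↦ ?_⟩
  obtain ⟨T, hT, hcard⟩ := exists_avoidingCover_card_le p hp Z S
  refine ⟨T, hT, hcard.trans ?_⟩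
  have hshattered := card_le_exp_of_forall_card_le hy.1 hy.2 (Finset.filter_subset _ _)
    fun J hJ ↦ hS J (mem_shatteredSets.1 hJ).1 (mem_shatteredSets.1 hJ).2
  calc (1 + ρ ^ p) ^ Z.card * ((shatteredSets S Z).card : ℝ) ^ p
      ≤ Real.exp (ρ ^ p) ^ Z.card * Real.exp (Z.card * (y - η * Real.log y)) ^ p := by
        gcongr
        · linarith [Real.add_one_le_exp (ρ ^ p)]
        · exact hshattered
    _ = Real.exp ((ρ ^ p + p * (y - η * Real.log y)) * Z.card) := by
        rw [← Real.exp_nat_mul, ← Real.exp_nat_mul, ← Real.exp_add]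
        congr 1
        ring
    _ ≤ Real.exp (c * Z.card) := by gcongr

end Combinatorics

section Folner

variable {G : Type*} [Group G]

lemma FolnerInv.mono {K K' : Finset G} {δ δ' : ℝ} {F : Finset G} (hK : K ⊆ K') (hδ : δ' ≤ δ)
    (h : FolnerInv K' δ' F) : FolnerInv K δ F := by
  refine ⟨h.1, le_trans (by gcongr) (h.2.trans (Nat.cast_le.2 ?_))⟩
  exact Set.ncard_le_ncard (inter_subset_inter_right _ fun s hs g hg ↦ hs g (hK hg))
    (F.finite_toSet.subset inter_subset_left)

variable (G) in
/-- The filter on the finite subsets of `G` expressing that `F` becomes more and more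
invariant. -/
def folnerFilter : Filter (Finset G) :=
  ⨅ p ∈ {p : Finset G × ℝ | 0 < p.2}, Filter.principal {F | FolnerInv p.1 p.2 F}

lemma hasBasis_folnerFilter :
    (folnerFilter G).HasBasis (fun p : Finset G × ℝ ↦ 0 < p.2)
      fun p ↦ {F | FolnerInv p.1 p.2 F} := by
  refine Filter.hasBasis_biInf_principal ?_ ⟨(∅, 1), one_pos (α := ℝ)⟩
  intro p hp q hq
  exact ⟨(p.1 ∪ q.1, min p.2 q.2), lt_min (α := ℝ) hp hq,
    fun _ ↦ FolnerInv.mono Finset.subset_union_left (min_le_left _ _),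
    fun _ ↦ FolnerInv.mono Finset.subset_union_right (min_le_right _ _)⟩

lemma eventually_folnerInv (K : Finset G) {δ : ℝ} (hδ : 0 < δ) :
    ∀ᶠ F in folnerFilter G, FolnerInv K δ F :=
  hasBasis_folnerFilter.mem_of_mem (i := (K, δ)) hδ

lemma eventually_folnerFilter_nonempty : ∀ᶠ F in folnerFilter G, F.Nonempty :=
  (eventually_folnerInv ∅ one_pos).mono fun _ h ↦ h.1

lemma FolnerAmenable.neBot_folnerFilter (h : FolnerAmenable G) : (folnerFilter G).NeBot :=
  hasBasis_folnerFilter.neBot_iff.2 fun hp ↦ h _ _ hp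

variable {ψ : Finset G → ℝ} {C d : ℝ}

lemma sSup_image_folnerInv_nonneg (hψ : ∀ F, 0 ≤ ψ F) (K : Finset G) (δ : ℝ) :
    0 ≤ sSup ((fun F : Finset G ↦ ψ F / F.card) '' {F | FolnerInv K δ F}) :=
  Real.sSup_nonneg (Set.forall_mem_image.2 fun F _ ↦ div_nonneg (hψ F) F.card.cast_nonneg)

lemma invLimsup_le_sSup (hψ : ∀ F, 0 ≤ ψ F) (K : Finset G) {δ : ℝ} (hδ : 0 < δ) :
    invLimsup ψ ≤ sSup ((fun F : Finset G ↦ ψ F / F.card) '' {F | FolnerInv K δ F}) := by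
  have hnonneg := sSup_image_folnerInv_nonneg hψ
  have : Nonempty {δ : ℝ // 0 < δ} := ⟨⟨1, one_pos⟩⟩
  have hbdd : BddBelow (range fun K ↦ ⨅ δ : {δ : ℝ // 0 < δ},
      sSup ((fun F : Finset G ↦ ψ F / F.card) '' {F | FolnerInv K δ F})) :=
    ⟨0, Set.forall_mem_range.2 fun K ↦ le_ciInf fun δ ↦ hnonneg K δ⟩
  exact (ciInf_le hbdd K).trans (ciInf_le (ι := {δ : ℝ // 0 < δ})
    ⟨0, Set.forall_mem_range.2 fun δ ↦ hnonneg K δ⟩ ⟨δ, hδ⟩)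

lemma invLimsup_le_of_eventually (hψ : ∀ F, 0 ≤ ψ F) (hd : 0 ≤ d)
    (h : ∀ᶠ F in folnerFilter G, ψ F ≤ d * F.card) : invLimsup ψ ≤ d := by
  obtain ⟨⟨K, δ⟩, hδ, hF⟩ := hasBasis_folnerFilter.eventually_iff.1 h
  refine (invLimsup_le_sSup hψ K hδ).trans (Real.sSup_le (Set.forall_mem_image.2 ?_) hd)
  exact fun F hKF ↦ div_le_of_le_mul₀ F.card.cast_nonneg hd (hF hKF)

lemma le_invLimsup_of_frequently (hC : ∀ F, ψ F ≤ C * F.card)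
    (h : ∃ᶠ F in folnerFilter G, d * F.card ≤ ψ F) : d ≤ invLimsup ψ := by
  have : Nonempty {δ : ℝ // 0 < δ} := ⟨⟨1, one_pos⟩⟩
  have card_pos {K δ} {F : Finset G} (hF : FolnerInv K δ F) : (0 : ℝ) < F.card :=
    Nat.cast_pos.2 hF.1.card_pos
  refine le_ciInf fun K ↦ le_ciInf fun δ ↦ ?_
  obtain ⟨F, hF, hle⟩ := hasBasis_folnerFilter.frequently_iff.1 h (i := (K, δ)) δ.2
  refine le_csSup_of_le ⟨C, Set.forall_mem_image.2 fun F hF ↦ ?_⟩ ⟨F, hF, rfl⟩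
    ((le_div_iff₀ (card_pos hF)).2 hle)
  exact (div_le_iff₀ (card_pos hF)).2 (hC F)

lemma invLimsup_pos_iff (hψ : ∀ F, 0 ≤ ψ F) (hC : ∀ F, ψ F ≤ C * F.card) :
    0 < invLimsup ψ ↔ ∃ d > 0, ∃ᶠ F in folnerFilter G, d * F.card ≤ ψ F := by
  refine ⟨fun hpos ↦ ⟨invLimsup ψ / 2, half_pos hpos, ?_⟩, fun ⟨d, hd, h⟩ ↦
    hd.trans_le (le_invLimsup_of_frequently hC h)⟩
  by_contra h
  have := invLimsup_le_of_eventually hψ (half_pos hpos).le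
    ((Filter.not_frequently.1 h).mono fun F hF ↦ (not_le.1 hF).le)
  linarith

end Folner

section IndependenceDensity

variable {G X : Type*} [Group G] [MulAction G X] {k l : ℕ} {A : Fin k → Set X} {D : G → Set X}

lemma IndepRel.anti {J J' : Set G} (h : IndepRel A D J) (hJ : J' ⊆ J) : IndepRel A D J' :=
  fun F hF ↦ h F (hF.trans hJ)

lemma IndepRel.of_subset_comp {B : Fin l → Set X} {J : Set G} (h : IndepRel A D J)
    (g : Fin l → Fin k) (hg : ∀ j, A (g j) ⊆ B j) : IndepRel B D J :=
  fun F hF hne σ ↦ (h F hF hne fun s ↦ g (σ s)).mono <|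
    iInter₂_mono fun s _ ↦ inter_subset_inter_right _ (preimage_mono (hg (σ s)))

lemma bddAbove_indep_card (A : Fin k → Set X) (D : G → Set X) (F : Finset G) :
    BddAbove {m : ℕ | ∃ J : Set G, IndepRel A D J ∧ m = ((F : Set G) ∩ J).ncard} := by
  refine ⟨F.card, ?_⟩
  rintro _ ⟨J, -, rfl⟩
  exact (Set.ncard_le_ncard inter_subset_left F.finite_toSet).trans_eq (Set.ncard_coe_finset F)

lemma exists_card_eq_maxIndep (A : Fin k → Set X) (D : G → Set X) (F : Finset G) :
    ∃ J ⊆ F, IndepRel A D (J : Set G) ∧ J.card = maxIndep A D F := by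
  obtain ⟨J, hJ, hcard⟩ := Nat.sSup_mem
    (s := {m : ℕ | ∃ J : Set G, IndepRel A D J ∧ m = ((F : Set G) ∩ J).ncard})
    ⟨_, ∅, fun _ hF hne ↦ absurd hF (by simpa using hne.ne_empty), rfl⟩
    (bddAbove_indep_card A D F)
  have hcoe : ((F.filter (· ∈ J) : Finset G) : Set G) = (F : Set G) ∩ J := by ext; simp
  refine ⟨F.filter (· ∈ J), Finset.filter_subset _ _, hJ.anti ?_, ?_⟩
  · exact hcoe ▸ inter_subset_right
  · rw [maxIndep, hcard, ← Set.ncard_coe_finset, hcoe]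

lemma card_le_maxIndep {F J : Finset G} (hJF : J ⊆ F) (hJ : IndepRel A D (J : Set G)) :
    J.card ≤ maxIndep A D F := by
  refine le_csSup (bddAbove_indep_card A D F) ⟨J, hJ, ?_⟩
  rw [inter_eq_self_of_subset_right (Finset.coe_subset.2 hJF), Set.ncard_coe_finset]

variable [MeasurableSpace X] {μ : Measure X} [IsProbabilityMeasure μ] {δ : ℝ}

lemma le_phiConst_iff (hδ : 0 ≤ δ) {F : Finset G} {a : ℝ} :
    a ≤ phiConst μ A δ F ↔ ∀ D : Set X, MeasurableSet D → 1 - δ ≤ μ.real D →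
      ∃ J ⊆ F, IndepRel A (fun _ ↦ D) (J : Set G) ∧ a ≤ J.card := by
  constructor
  · intro h D hD hμ
    obtain ⟨J, hJF, hJ, hcard⟩ := exists_card_eq_maxIndep A (fun _ : G ↦ D) F
    have hle : phiConst μ A δ F ≤ J.card :=
      Nat.sInf_le ⟨D, hD, hμ, hcard⟩
    exact ⟨J, hJF, hJ, h.trans (Nat.cast_le.2 hle)⟩
  · intro h
    obtain ⟨D, hD, hμ, hm⟩ := Nat.sInf_mem (s := {m : ℕ | ∃ D : Set X, MeasurableSet D ∧
      1 - δ ≤ (μ D).toReal ∧ m = maxIndep A (fun _ : G ↦ D) F})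
      ⟨_, univ, MeasurableSet.univ, by simp [hδ], rfl⟩
    obtain ⟨J, hJF, hJ, hle⟩ := h D hD hμ
    exact hle.trans (Nat.cast_le.2 ((card_le_maxIndep hJF hJ).trans_eq hm.symm))

lemma phiConst_le_card (hδ : 0 ≤ δ) (F : Finset G) : phiConst μ A δ F ≤ F.card := by
  obtain ⟨J, hJF, -, hle⟩ :=
    (le_phiConst_iff (μ := μ) (A := A) (F := F) hδ).1 le_rfl univ .univ (by simp [hδ])
  exact (Nat.cast_le.1 hle).trans (Finset.card_le_card hJF)

lemma phiConst_le_phiConst_of_subset_comp {B : Fin l → Set X} (hδ : 0 ≤ δ) (g : Fin l → Fin k)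
    (hg : ∀ j, A (g j) ⊆ B j) (F : Finset G) : phiConst μ A δ F ≤ phiConst μ B δ F :=
  Nat.cast_le.1 <| (le_phiConst_iff hδ).2 fun D hD hμ ↦
    ((le_phiConst_iff hδ).1 le_rfl D hD hμ).imp fun _ ⟨hJF, hJ, hle⟩ ↦
      ⟨hJF, hJ.of_subset_comp g hg, hle⟩

lemma upperIndepDens_pos_iff :
    0 < upperIndepDens G μ A ↔
      ∃ δ > 0, ∃ d > 0, ∃ᶠ F in folnerFilter G, d * F.card ≤ (phiConst μ A δ F : ℝ) := by
  have hle (δ : {δ : ℝ // 0 < δ}) (F : Finset G) : (phiConst μ A δ F : ℝ) ≤ 1 * F.card := by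
    exact_mod_cast (phiConst_le_card δ.2.le F).trans_eq (one_mul _).symm
  have hiff (δ : {δ : ℝ // 0 < δ}) := invLimsup_pos_iff (fun F ↦ Nat.cast_nonneg _) (hle δ)
  have hbdd : BddAbove (range fun δ : {δ : ℝ // 0 < δ} ↦
      invLimsup fun F : Finset G ↦ (phiConst μ A δ F : ℝ)) :=
    ⟨1, Set.forall_mem_range.2 fun δ ↦ invLimsup_le_of_eventually (fun F ↦ Nat.cast_nonneg _)
      zero_le_one (.of_forall (hle δ))⟩
  have : Nonempty {δ : ℝ // 0 < δ} := ⟨⟨1, one_pos⟩⟩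
  refine ⟨fun h ↦ ?_, fun ⟨δ, hδ, h⟩ ↦
    ((hiff ⟨δ, hδ⟩).2 h).trans_le (le_ciSup hbdd ⟨δ, hδ⟩)⟩
  obtain ⟨δ, hδ⟩ := exists_lt_of_lt_ciSup h
  exact ⟨δ, δ.2, (hiff δ).1 hδ⟩

lemma upperIndepDens_pos_of_subset_comp {B : Fin l → Set X} (g : Fin l → Fin k)
    (hg : ∀ j, A (g j) ⊆ B j) (h : 0 < upperIndepDens G μ A) : 0 < upperIndepDens G μ B := by
  obtain ⟨δ, hδ, d, hd, h⟩ := upperIndepDens_pos_iff.1 h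
  exact upperIndepDens_pos_iff.2 ⟨δ, hδ, d, hd, h.mono fun F hF ↦
    hF.trans (Nat.cast_le.2 (phiConst_le_phiConst_of_subset_comp hδ.le g hg F))⟩

end IndependenceDensity

section Entropy

lemma sum_negMulLog_le_sum_mul_neg_log {ι : Type*} [Fintype ι] {p q : ι → ℝ}
    (hp : ∀ i, 0 ≤ p i) (hp₁ : ∑ i, p i = 1) (hq : ∀ i, 0 < q i) (hq₁ : ∑ i, q i ≤ 1) :
    ∑ i, Real.negMulLog (p i) ≤ ∑ i, p i * -Real.log (q i) := by
  have hterm (i) : Real.negMulLog (p i) - p i * -Real.log (q i) ≤ q i - p i := by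
    rcases (hp i).eq_or_lt with h0 | h0
    · simp [← h0, (hq i).le]
    · have hlog := Real.log_le_sub_one_of_pos (div_pos (hq i) h0)
      rw [Real.log_div (hq i).ne' h0.ne'] at hlog
      calc Real.negMulLog (p i) - p i * -Real.log (q i)
          = p i * (Real.log (q i) - Real.log (p i)) := by rw [Real.negMulLog]; ring
        _ ≤ p i * (q i / p i - 1) := by gcongr
        _ = q i - p i := by field_simp
  have hsum := Finset.sum_le_sum fun i (_ : i ∈ Finset.univ) ↦ hterm i
  rw [Finset.sum_sub_distrib, Finset.sum_sub_distrib] at hsum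
  linarith

section NoiseKernel

variable {α ι κ : Type*} [Fintype ι] {β : ℝ}

/-- The channel on `ι` that keeps a letter with probability about `1 - β` and otherwise resamples
it uniformly; it is normalised only up to an inequality. -/
noncomputable def noiseKernel (β : ℝ) (i j : ι) : ℝ :=
  if i = j then 1 - β else β / Fintype.card ι

lemma noiseKernel_pos (hβ₀ : 0 < β) (hβ₁ : β < 1) (i j : ι) : 0 < noiseKernel β i j := by
  have : 0 < Fintype.card ι := Fintype.card_pos_iff.2 ⟨i⟩
  unfold noiseKernel
  split_ifs
  · linarith
  · positivity

lemma sum_noiseKernel_le_one (hβ₀ : 0 ≤ β) (j : ι) : ∑ i, noiseKernel β i j ≤ 1 := by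
  have hle (i) : noiseKernel β i j ≤ (if i = j then 1 - β else 0) + β / Fintype.card ι := by
    have : 0 ≤ β / Fintype.card ι := by positivity
    unfold noiseKernel
    split_ifs <;> linarith
  have hcard : (Fintype.card ι : ℝ) ≠ 0 := Nat.cast_ne_zero.2 (Fintype.card_pos_iff.2 ⟨j⟩).ne'
  calc ∑ i, noiseKernel β i j
      ≤ ∑ i, ((if i = j then 1 - β else 0) + β / Fintype.card ι) :=
        Finset.sum_le_sum fun i _ ↦ hle i
    _ = 1 := by simp [Finset.sum_add_distrib, mul_div_cancel₀ _ hcard]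

lemma neg_log_noiseKernel_le (hβ₀ : 0 ≤ β) (hβ₁ : β < 1) (i j : ι) :
    -Real.log (noiseKernel β i j) ≤
      -Real.log (1 - β) + Real.log (Fintype.card ι / β) * (if i ≠ j then 1 else 0) := by
  have hlog : Real.log (1 - β) ≤ 0 := Real.log_nonpos (by linarith) (by linarith)
  by_cases hij : i = j
  · simp [noiseKernel, hij]
  · rw [noiseKernel, if_neg hij, if_pos hij, ← Real.log_inv, inv_div]
    linarith

variable [Fintype α] [Fintype κ]

/-- The subprobability on words `α → ι` obtained by passing a uniformly chosen codeword of `τ`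
through the noise channel. -/
noncomputable def codeMixture (β : ℝ) (τ : κ → α → ι) (f : α → ι) : ℝ :=
  (Fintype.card κ : ℝ)⁻¹ * ∑ a, ∏ t, noiseKernel β (f t) (τ a t)

lemma codeMixture_pos [Nonempty κ] (hβ₀ : 0 < β) (hβ₁ : β < 1) (τ : κ → α → ι) (f : α → ι) :
    0 < codeMixture β τ f :=
  mul_pos (inv_pos.2 (Nat.cast_pos.2 Fintype.card_pos)) <|
    Finset.sum_pos (fun _ _ ↦ Finset.prod_pos fun _ _ ↦ noiseKernel_pos hβ₀ hβ₁ _ _)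
      Finset.univ_nonempty

lemma sum_codeMixture_le_one [DecidableEq α] (hβ₀ : 0 < β) (hβ₁ : β < 1) (τ : κ → α → ι) :
    ∑ f, codeMixture β τ f ≤ 1 := by
  have hword (a) : ∑ f : α → ι, ∏ t, noiseKernel β (f t) (τ a t) ≤ 1 := by
    have hprod := Finset.prod_univ_sum (fun _ : α ↦ (Finset.univ : Finset ι))
      fun t i ↦ noiseKernel β i (τ a t)
    rw [Fintype.piFinset_univ] at hprod
    rw [← hprod]
    exact Finset.prod_le_one
      (fun t _ ↦ Finset.sum_nonneg fun i _ ↦ (noiseKernel_pos hβ₀ hβ₁ _ _).le)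
      fun t _ ↦ sum_noiseKernel_le_one hβ₀.le _
  simp only [codeMixture]
  rw [← Finset.mul_sum, Finset.sum_comm]
  refine inv_mul_le_one_of_le₀ ((Finset.sum_le_sum fun a _ ↦ hword a).trans_eq ?_) (by positivity)
  simp

lemma neg_log_codeMixture_le (hβ₀ : 0 < β) (hβ₁ : β < 1) (τ : κ → α → ι) (f : α → ι) (a : κ) :
    -Real.log (codeMixture β τ f) ≤ Real.log (Fintype.card κ) +
      Fintype.card α * -Real.log (1 - β) +
      Real.log (Fintype.card ι / β) * ∑ t, if f t ≠ τ a t then 1 else 0 := by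
  have hκ : (0 : ℝ) < Fintype.card κ := Nat.cast_pos.2 (Fintype.card_pos_iff.2 ⟨a⟩)
  have hpos (b) : 0 < ∏ t, noiseKernel β (f t) (τ b t) :=
    Finset.prod_pos fun t _ ↦ noiseKernel_pos hβ₀ hβ₁ _ _
  have hlog : Real.log ((Fintype.card κ : ℝ)⁻¹ * ∏ t, noiseKernel β (f t) (τ a t)) ≤
      Real.log (codeMixture β τ f) := by
    refine Real.log_le_log (mul_pos (inv_pos.2 hκ) (hpos a)) ?_
    unfold codeMixture
    gcongr
    exact Finset.single_le_sum (f := fun b ↦ ∏ t, noiseKernel β (f t) (τ b t))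
      (fun b _ ↦ (hpos b).le) (Finset.mem_univ a)
  rw [Real.log_mul (inv_pos.2 hκ).ne' (hpos a).ne', Real.log_inv,
    Real.log_prod fun t _ ↦ (noiseKernel_pos hβ₀ hβ₁ _ _).ne'] at hlog
  have hsum := Finset.sum_le_sum fun t (_ : t ∈ Finset.univ) ↦
    neg_log_noiseKernel_le hβ₀.le hβ₁ (f t) (τ a t)
  rw [Finset.sum_add_distrib, ← Finset.mul_sum, Finset.sum_neg_distrib, Finset.sum_const,
    Finset.card_univ, nsmul_eq_mul] at hsum
  linarith

end NoiseKernel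

variable {G X : Type*} [Group G] [MulAction G X] [MeasurableSpace X] {r : ℕ} {p : X → Fin r}

/-- The `p`-name over the finite set `F` of a point. -/
def nameOn {ι : Type*} (p : X → ι) (F : Finset G) (x : X) : F → ι := fun s ↦ p ((s : G) • x)

lemma IsMeasPartition.exists_labelling {P : Fin r → Set X} (hP : IsMeasPartition P) :
    ∃ p : X → Fin r, Measurable p ∧ P = fun i ↦ p ⁻¹' {i} := by
  obtain ⟨hmeas, hdisj, hcover⟩ := hP
  choose p hp using fun x ↦ mem_iUnion.1 (hcover ▸ mem_univ x : x ∈ ⋃ i, P i)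
  have hPp : P = fun i ↦ p ⁻¹' {i} := by
    ext i x
    refine ⟨fun hx ↦ by_contra fun hne ↦ ?_, fun hx ↦ mem_singleton_iff.1 hx ▸ hp x⟩
    exact Set.disjoint_left.1 (hdisj hne) (hp x) hx
  exact ⟨p, measurable_to_countable' fun i ↦ congrFun hPp i ▸ hmeas i, hPp⟩

lemma isMeasPartition_of_labelling (hp : Measurable p) : IsMeasPartition fun i ↦ p ⁻¹' {i} :=
  ⟨fun i ↦ hp (measurableSet_singleton i),
    fun i j hij ↦ Disjoint.preimage p (by simpa using hij), by ext; simp⟩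

lemma HJoin_eq_sum_nameOn (μ : Measure X) (p : X → Fin r) (F : Finset G) :
    HJoin μ (fun i ↦ p ⁻¹' {i}) F =
      ∑ f : F → Fin r, Real.negMulLog (μ.real (nameOn p F ⁻¹' {f})) := by
  refine Finset.sum_congr rfl fun f _ ↦ ?_
  have hname : ⋂ s : F, (fun x ↦ (s : G) • x) ⁻¹' (p ⁻¹' {f s}) = nameOn p F ⁻¹' {f} := by
    ext x
    simp [nameOn, funext_iff]
  rw [hname, Measure.real]

variable {μ : Measure X} [IsProbabilityMeasure μ]

lemma HJoin_nonneg (P : Fin r → Set X) (F : Finset G) : 0 ≤ HJoin μ P F :=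
  Finset.sum_nonneg fun _ _ ↦ Real.negMulLog_nonneg ENNReal.toReal_nonneg measureReal_le_one

variable [MeasurableConstSMul G X]

lemma measurable_nameOn {ι : Type*} [MeasurableSpace ι] {p : X → ι} (hp : Measurable p)
    (F : Finset G) : Measurable (nameOn p F) :=
  measurable_pi_iff.2 fun s ↦ hp.comp (measurable_const_smul (s : G))

lemma sum_measureReal_nameOn_mul (hp : Measurable p) (F : Finset G) (g : (F → Fin r) → ℝ) :
    ∑ f, μ.real (nameOn p F ⁻¹' {f}) * g f = ∫ x, g (nameOn p F x) ∂μ := by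
  have hn := measurable_nameOn (G := G) hp F
  have := Measure.isProbabilityMeasure_map (μ := μ) hn.aemeasurable
  rw [← integral_map (f := g) hn.aemeasurable (measurable_of_finite g).aestronglyMeasurable,
    integral_fintype Integrable.of_finite]
  simp [map_measureReal_apply hn (measurableSet_singleton _)]

lemma sum_measureReal_nameOn (hp : Measurable p) (F : Finset G) :
    ∑ f, μ.real (nameOn p F ⁻¹' {f}) = 1 := by
  simpa using sum_measureReal_nameOn_mul (μ := μ) hp F fun _ ↦ 1

lemma HJoin_le_card_mul_log {P : Fin r → Set X} (hP : IsMeasPartition P) (F : Finset G) :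
    HJoin μ P F ≤ F.card * Real.log r := by
  obtain ⟨p, hp, rfl⟩ := hP.exists_labelling
  obtain ⟨x⟩ := nonempty_of_isProbabilityMeasure μ
  have hr : 0 < r := (p x).pos
  calc HJoin μ (fun i ↦ p ⁻¹' {i}) F
      ≤ ∑ f, μ.real (nameOn p F ⁻¹' {f}) * -Real.log ((r : ℝ) ^ F.card)⁻¹ := by
        rw [HJoin_eq_sum_nameOn]
        exact sum_negMulLog_le_sum_mul_neg_log (fun _ ↦ measureReal_nonneg)
          (sum_measureReal_nameOn hp F) (fun _ ↦ by positivity) (by simp [hr.ne'])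
    _ = F.card * Real.log r := by
        rw [← Finset.sum_mul, sum_measureReal_nameOn hp F, Real.log_inv, Real.log_pow]
        ring

/-- The entropy is at most the cross entropy relative to the codewords passed through a noise
channel. -/
lemma HJoin_le_of_code (hp : Measurable p) (F : Finset G) {N : ℕ} {Φ : X → Fin N}
    (hΦ : Measurable Φ) (τ : Fin N → G → Fin r) {β : ℝ} (hβ₀ : 0 < β) (hβ₁ : β < 1) :
    HJoin μ (fun i ↦ p ⁻¹' {i}) F ≤ Real.log N + F.card * -Real.log (1 - β) +
      Real.log (r / β) * ∑ t ∈ F, μ.real {x | p (t • x) ≠ τ (Φ x) t} := by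
  obtain ⟨x⟩ := nonempty_of_isProbabilityMeasure μ
  have : Nonempty (Fin N) := ⟨Φ x⟩
  let q : (F → Fin r) → ℝ := codeMixture β fun a t ↦ τ a t
  have hmeas (t : G) : MeasurableSet {x | p (t • x) ≠ τ (Φ x) t} :=
    (measurableSet_eq_fun (hp.comp (measurable_const_smul t))
      ((measurable_of_finite fun a ↦ τ a t).comp hΦ)).compl
  have hint (t : G) : Integrable ({x | p (t • x) ≠ τ (Φ x) t}.indicator fun _ ↦ (1 : ℝ)) μ :=
    (integrable_const 1).indicator (hmeas t)
  have hn := measurable_nameOn (G := G) hp F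
  have := Measure.isProbabilityMeasure_map (μ := μ) hn.aemeasurable
  have hintq : Integrable (fun x ↦ -Real.log (q (nameOn p F x))) μ :=
    (Integrable.of_finite (μ := μ.map (nameOn p F)) (f := fun f ↦ -Real.log (q f))).comp_measurable
      hn
  calc HJoin μ (fun i ↦ p ⁻¹' {i}) F
      ≤ ∑ f, μ.real (nameOn p F ⁻¹' {f}) * -Real.log (q f) := by
        rw [HJoin_eq_sum_nameOn]
        exact sum_negMulLog_le_sum_mul_neg_log (fun _ ↦ measureReal_nonneg)
          (sum_measureReal_nameOn hp F) (codeMixture_pos hβ₀ hβ₁ fun a (t : F) ↦ τ a t)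
          (sum_codeMixture_le_one hβ₀ hβ₁ fun a (t : F) ↦ τ a t)
    _ = ∫ x, -Real.log (q (nameOn p F x)) ∂μ :=
        sum_measureReal_nameOn_mul hp F fun f ↦ -Real.log (q f)
    _ ≤ ∫ x, (Real.log N + F.card * -Real.log (1 - β) + Real.log (r / β) *
          ∑ t ∈ F, {x | p (t • x) ≠ τ (Φ x) t}.indicator (fun _ ↦ (1 : ℝ)) x) ∂μ := by
        refine integral_mono hintq ((integrable_const _).add
          ((integrable_finsetSum _ fun t _ ↦ hint t).const_mul _)) fun x ↦ ?_
        refine (neg_log_codeMixture_le hβ₀ hβ₁ (fun a (t : F) ↦ τ a t) (nameOn p F x)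
          (Φ x)).trans_eq ?_
        simp only [Fintype.card_fin, Fintype.card_coe, ← Finset.sum_coe_sort F]
        congr 2
        exact Finset.sum_congr rfl fun t _ ↦ by
          by_cases h : p ((t : G) • x) = τ (Φ x) t <;> simp [nameOn, h]
    _ = _ := by
        rw [integral_add (integrable_const _)
          ((integrable_finsetSum _ fun t _ ↦ hint t).const_mul _), integral_const_mul,
          integral_finsetSum _ fun t _ ↦ hint t]
        simp [integral_indicator_const, hmeas]

end Entropy

section IndependenceToEntropy

lemma exists_card_le_exp_of_sum_eq_one {ι : Type*} [Fintype ι] {p : ι → ℝ} (hp : ∀ i, 0 ≤ p i)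
    (hp₁ : ∑ i, p i = 1) (t : ℝ) :
    ∃ N : Finset ι, (N.card : ℝ) ≤ Real.exp t ∧
      t * (1 - ∑ i ∈ N, p i) ≤ ∑ i, Real.negMulLog (p i) := by
  have hle (i) : p i ≤ 1 := hp₁ ▸ Finset.single_le_sum (fun i _ ↦ hp i) (Finset.mem_univ i)
  let N : Finset ι := {i | Real.exp (-t) ≤ p i}
  refine ⟨N, ?_, ?_⟩
  · have hmass : N.card * Real.exp (-t) ≤ 1 := calc
      N.card * Real.exp (-t) ≤ ∑ i ∈ N, p i := by
        rw [← nsmul_eq_mul]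
        exact Finset.card_nsmul_le_sum _ _ _ fun i hi ↦ (Finset.mem_filter.1 hi).2
      _ ≤ 1 := hp₁ ▸ Finset.sum_le_univ_sum_of_nonneg hp
    rwa [Real.exp_neg, ← div_eq_mul_inv, div_le_one (Real.exp_pos t)] at hmass
  · have hlight (i) (hi : i ∈ Nᶜ) : t * p i ≤ Real.negMulLog (p i) := by
      rcases (hp i).eq_or_lt with h0 | h0
      · simp [← h0]
      · have hlt : p i < Real.exp (-t) := by simpa [N] using hi
        have hlog := Real.log_le_log h0 hlt.le
        rw [Real.log_exp] at hlog
        rw [Real.negMulLog]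
        nlinarith
    calc t * (1 - ∑ i ∈ N, p i) = ∑ i ∈ Nᶜ, t * p i := by
          rw [← hp₁, ← Finset.sum_add_sum_compl N p, add_sub_cancel_left, Finset.mul_sum]
      _ ≤ ∑ i ∈ Nᶜ, Real.negMulLog (p i) := Finset.sum_le_sum hlight
      _ ≤ ∑ i, Real.negMulLog (p i) :=
          Finset.sum_le_univ_sum_of_nonneg fun i ↦ Real.negMulLog_nonneg (hp i) (hle i)

variable {G X κ : Type*} [Group G] [MulAction G X] {l : ℕ} {U : Fin l → Set X}

/-- Over `J` all `l ^ |J|` words occur as itineraries through `U`, whereas the points with a given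
name miss one letter at each site. -/
lemma pow_card_le_card_mul_pow_of_indepRel (hl : 0 < l) {p : X → κ} {j : κ → Fin l}
    (hj : ∀ x, x ∉ U (j (p x))) {F J : Finset G} (hJF : J ⊆ F) (hJne : J.Nonempty)
    {N : Finset (F → κ)} (hJ : IndepRel U (fun _ ↦ nameOn p F ⁻¹' N) (J : Set G)) :
    l ^ J.card ≤ N.card * (l - 1) ^ J.card := by
  let avoiding (f : F → κ) : Finset (J → Fin l) :=
    Fintype.piFinset fun s ↦ Finset.univ.erase (j (f ⟨s, hJF s.2⟩))
  have hcard (f) (_ : f ∈ N) : (avoiding f).card ≤ (l - 1) ^ J.card := by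
    simp [avoiding, Fintype.card_piFinset, Finset.card_erase_of_mem]
  have hcover : (Finset.univ : Finset (J → Fin l)) ⊆ N.biUnion avoiding := fun σ _ ↦ by
    obtain ⟨x, hx⟩ := hJ J subset_rfl hJne fun s ↦ if h : s ∈ J then σ ⟨s, h⟩ else ⟨0, hl⟩
    simp only [mem_iInter] at hx
    obtain ⟨s₀, hs₀⟩ := hJne
    refine Finset.mem_biUnion.2 ⟨nameOn p F x, (hx s₀ hs₀).1, Fintype.mem_piFinset.2 fun s ↦ ?_⟩
    refine Finset.mem_erase.2 ⟨fun h ↦ hj ((s : G) • x) ?_, Finset.mem_univ _⟩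
    have hmem : (s : G) • x ∈ U (σ s) := by simpa using (hx s s.2).2
    rwa [h] at hmem
  simpa using
    (Finset.card_le_card hcover).trans (Finset.card_biUnion_le_card_mul _ _ _ hcard)

lemma card_mul_log_le_log_card_of_indepRel (hl : 2 ≤ l) {p : X → κ} {j : κ → Fin l}
    (hj : ∀ x, x ∉ U (j (p x))) {F J : Finset G} (hJF : J ⊆ F) {N : Finset (F → κ)}
    (hJ : IndepRel U (fun _ ↦ nameOn p F ⁻¹' N) (J : Set G)) :
    J.card * Real.log (l / (l - 1)) ≤ Real.log N.card := by
  rcases J.eq_empty_or_nonempty with rfl | hJne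
  · simpa using Real.log_natCast_nonneg N.card
  have hl₁ : (0 : ℝ) < l - 1 := sub_pos.2 (by exact_mod_cast hl)
  have : (0 : ℝ) < l := by linarith
  have hpow : (l : ℝ) ^ J.card ≤ N.card * (l - 1) ^ J.card := by
    rw [← Nat.cast_pred (by omega : 0 < l)]
    exact_mod_cast pow_card_le_card_mul_pow_of_indepRel (by omega) hj hJF hJne hJ
  rw [← Real.log_pow]
  refine Real.log_le_log (by positivity) ?_
  rwa [div_pow, div_le_iff₀ (by positivity)]

variable [MeasurableSpace X] [MeasurableConstSMul G X] {μ : Measure X} [IsProbabilityMeasure μ]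

lemma le_HJoin_of_le_phiConst (hl : 2 ≤ l) {r : ℕ} {p : X → Fin r} (hp : Measurable p)
    {j : Fin r → Fin l} (hj : ∀ x, x ∉ U (j (p x))) {F : Finset G} (hF : F.Nonempty)
    {δ d b : ℝ} (hδ : 0 ≤ δ) (hb : 0 ≤ b) (hbd : b < d * Real.log (l / (l - 1)))
    (h : d * F.card ≤ phiConst μ U δ F) :
    δ * b * F.card ≤ HJoin μ (fun i ↦ p ⁻¹' {i}) F := by
  have hF₀ : (0 : ℝ) < F.card := Nat.cast_pos.2 hF.card_pos
  have hmeas := measurable_nameOn (G := G) hp F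
  obtain ⟨N, hcard, hN⟩ := exists_card_le_exp_of_sum_eq_one
    (p := fun f ↦ μ.real (nameOn p F ⁻¹' {f})) (fun _ ↦ measureReal_nonneg)
    (sum_measureReal_nameOn hp F) (b * F.card)
  have hlight : μ.real (nameOn p F ⁻¹' N) < 1 - δ := by
    by_contra! hD
    obtain ⟨J, hJF, hJ, hle⟩ := (le_phiConst_iff hδ).1 h _ (hmeas N.measurableSet) hD
    have hl₁ : (1 : ℝ) < l := by exact_mod_cast hl
    have hlog : 0 < Real.log (l / (l - 1)) :=
      Real.log_pos ((one_lt_div (by linarith)).2 (by linarith))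
    have hN₀ : Real.log N.card ≤ b * F.card := by
      rcases N.eq_empty_or_nonempty with rfl | hNne
      · simpa using mul_nonneg hb hF₀.le
      · exact (Real.log_le_iff_le_exp (Nat.cast_pos.2 hNne.card_pos)).2 hcard
    have hJN := card_mul_log_le_log_card_of_indepRel hl hj hJF hJ
    nlinarith [mul_le_mul_of_nonneg_right hle hlog.le, mul_lt_mul_of_pos_right hbd hF₀]
  rw [HJoin_eq_sum_nameOn]
  refine le_trans ?_ hN
  have hsum : ∑ f ∈ N, μ.real (nameOn p F ⁻¹' {f}) = μ.real (nameOn p F ⁻¹' N) :=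
    sum_measureReal_preimage_singleton N fun f _ ↦ hmeas (measurableSet_singleton f)
  rw [hsum]
  nlinarith [mul_nonneg hb hF₀.le]

lemma invLimsup_HJoin_pos_of_upperIndepDens_pos (hl : 2 ≤ l) (hU : 0 < upperIndepDens G μ U)
    {r : ℕ} {P : Fin r → Set X} (hP : IsMeasPartition P) (hPU : ∀ a, ∃ j, P a ⊆ (U j)ᶜ) :
    0 < invLimsup fun F : Finset G ↦ HJoin μ P F := by
  rw [invLimsup_pos_iff (C := Real.log r) (HJoin_nonneg P) fun F ↦
    (HJoin_le_card_mul_log hP F).trans_eq (mul_comm _ _)]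
  obtain ⟨δ, hδ, d, hd, h⟩ := upperIndepDens_pos_iff.1 hU
  obtain ⟨p, hp, rfl⟩ := hP.exists_labelling
  choose j hj using hPU
  have hl₁ : (1 : ℝ) < l := by exact_mod_cast hl
  have hlog : 0 < d * Real.log (l / (l - 1)) :=
    mul_pos hd (Real.log_pos ((one_lt_div (by linarith)).2 (by linarith)))
  obtain ⟨b, hb, hbd⟩ := exists_between hlog
  exact ⟨δ * b, by positivity, (h.and_eventually eventually_folnerFilter_nonempty).mono
    fun F hF ↦ le_HJoin_of_le_phiConst hl hp (fun x hx ↦ hj (p x) rfl hx) hF.2 hδ.le hb.le hbd hF.1⟩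

end IndependenceToEntropy

section Midpoints

open Filter Topology

lemma integral_norm_le_norm_L2 {X V : Type*} [MeasurableSpace X] [NormedAddCommGroup V]
    {μ : Measure X} [IsProbabilityMeasure μ] (u : Lp V 2 μ) :
    ∫ x, ‖u x‖ ∂μ ≤ ‖u‖ := by
  rw [integral_norm_eq_lintegral_enorm (Lp.aestronglyMeasurable u),
    ← eLpNorm_one_eq_lintegral_enorm, Lp.norm_def]
  exact ENNReal.toReal_mono (Lp.eLpNorm_ne_top u)
    (eLpNorm_le_eLpNorm_of_exponent_le one_le_two (Lp.aestronglyMeasurable u))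

variable {H : Type*} [NormedAddCommGroup H] [InnerProductSpace ℝ H]

lemma norm_sub_sq_le_of_le_norm_midpoint {f g : H} {a b c : ℝ} (hf : ‖f‖ ^ 2 ≤ a)
    (hg : ‖g‖ ^ 2 ≤ b) (hmid : c ≤ ‖(2⁻¹ : ℝ) • (f + g)‖ ^ 2) :
    ‖f - g‖ ^ 2 ≤ 2 * a + 2 * b - 4 * c := by
  have hpar := parallelogram_law_with_norm ℝ f g
  have hscale : ‖(2⁻¹ : ℝ) • (f + g)‖ ^ 2 = ‖f + g‖ ^ 2 / 4 := by
    rw [norm_smul, mul_pow]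
    norm_num
    ring
  linarith [hpar, sq ‖f‖, sq ‖g‖, sq ‖f + g‖, sq ‖f - g‖]

/-- If midpoints of elements of each set lie in the preceding set, then nearly norm-minimal
elements form a Cauchy sequence, as in the projection theorem. -/
lemma exists_tendsto_of_midpoint_mem [CompleteSpace H] {C : ℕ → Set H} (hanti : Antitone C)
    (hne : ∀ n, (C n).Nonempty) {R : ℝ} (hR : ∀ f ∈ C 0, ‖f‖ ≤ R)
    (hmid : ∀ n, ∀ f ∈ C (n + 1), ∀ g ∈ C (n + 1), (2⁻¹ : ℝ) • (f + g) ∈ C n) :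
    ∃ f : ℕ → H, (∀ n, f n ∈ C n) ∧ ∃ w, Tendsto f atTop (𝓝 w) := by
  let e (n : ℕ) : ℝ := sInf ((‖·‖ ^ 2) '' C n)
  have hbelow (n) : BddBelow ((‖·‖ ^ 2) '' C n) := ⟨0, by rintro _ ⟨f, -, rfl⟩; positivity⟩
  have hle {n f} (hf : f ∈ C n) : e n ≤ ‖f‖ ^ 2 := csInf_le (hbelow n) ⟨f, hf, rfl⟩
  have hmono : Monotone e := fun n m hnm ↦
    csInf_le_csInf (hbelow n) ((hne m).image _) (image_mono (hanti hnm))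
  have hbdd : BddAbove (range e) := by
    refine ⟨R ^ 2, ?_⟩
    rintro _ ⟨n, rfl⟩
    obtain ⟨f, hf⟩ := hne n
    exact (hle hf).trans (pow_le_pow_left₀ (norm_nonneg f) (hR f (hanti n.zero_le hf)) 2)
  have hlim := tendsto_atTop_ciSup hmono hbdd
  have hε : Tendsto (fun n : ℕ ↦ 1 / ((n : ℝ) + 1)) atTop (𝓝 0) :=
    tendsto_one_div_add_atTop_nhds_zero_nat
  have hnear (n : ℕ) : ∃ f ∈ C n, ‖f‖ ^ 2 ≤ e n + 1 / ((n : ℝ) + 1) := by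
    obtain ⟨_, ⟨f, hf, rfl⟩, h⟩ := exists_lt_of_csInf_lt ((hne n).image (‖·‖ ^ 2))
      (lt_add_of_pos_right (e n) (by positivity : (0 : ℝ) < 1 / ((n : ℝ) + 1)))
    exact ⟨f, hf, h.le⟩
  choose f hfC hf using hnear
  have hdist (n m : ℕ) (hnm : n ≤ m) :
      dist (f (n + 1)) (f (m + 1)) ≤ √(4 * ((⨆ n, e n) - e n + 1 / ((n : ℝ) + 1))) := by
    have hfL (i : ℕ) (hi : n ≤ i) : ‖f (i + 1)‖ ^ 2 ≤ (⨆ n, e n) + 1 / ((n : ℝ) + 1) :=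
      (hf _).trans <| add_le_add (le_ciSup hbdd _)
        (one_div_le_one_div_of_le (by positivity) (by exact_mod_cast (by lia : n + 1 ≤ i + 1 + 1)))
    rw [dist_eq_norm]
    refine Real.le_sqrt_of_sq_le ((norm_sub_sq_le_of_le_norm_midpoint (hfL n le_rfl) (hfL m hnm)
      (hle (hmid n _ (hfC _) _ (hanti (by omega) (hfC _))))).trans_eq ?_)
    ring
  have hCauchy : CauchySeq fun n ↦ f (n + 1) := by
    refine cauchySeq_of_le_tendsto_0' _ hdist ?_
    simpa using ((((tendsto_const_nhds (x := ⨆ n, e n)).sub hlim).add hε).const_mul 4).sqrt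
  obtain ⟨w, hw⟩ := cauchySeq_tendsto_of_complete hCauchy
  exact ⟨f, hfC, w, (tendsto_add_atTop_iff_nat 1).1 hw⟩

variable {X : Type*} [MeasurableSpace X] {μ : Measure X}

lemma exists_tendsto_integral_norm_sub_of_midpoint_mem [CompleteSpace H] [IsProbabilityMeasure μ]
    {C : ℕ → Set (X → H)} (hanti : Antitone C) (hne : ∀ n, (C n).Nonempty)
    (hmeas : ∀ f ∈ C 0, AEStronglyMeasurable f μ) {R : ℝ} (hR : ∀ f ∈ C 0, ∀ x, ‖f x‖ ≤ R)
    (hmid : ∀ n, ∀ f ∈ C (n + 1), ∀ g ∈ C (n + 1), (2⁻¹ : ℝ) • (f + g) ∈ C n) :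
    ∃ f : ℕ → X → H, (∀ n, f n ∈ C n) ∧ ∃ w : X → H, StronglyMeasurable w ∧ Integrable w μ ∧
      Tendsto (fun n ↦ ∫ x, ‖f n x - w x‖ ∂μ) atTop (𝓝 0) := by
  let D (n : ℕ) : Set (Lp H 2 μ) := {u | ∃ f ∈ C n, u =ᵐ[μ] f}
  have hDanti : Antitone D := fun n m hnm u ⟨f, hf, huf⟩ ↦ ⟨f, hanti hnm hf, huf⟩
  have hDne (n) : (D n).Nonempty := by
    obtain ⟨f, hf⟩ := hne n
    have hf₀ := hanti n.zero_le hf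
    have hmem : MemLp f 2 μ := .of_bound (hmeas f hf₀) R (.of_forall (hR f hf₀))
    exact ⟨hmem.toLp, f, hf, hmem.coeFn_toLp⟩
  have hDR (u) (hu : u ∈ D 0) : ‖u‖ ≤ max R 0 := by
    obtain ⟨f, hf, huf⟩ := hu
    have := Lp.norm_le_of_ae_bound (f := u) (le_max_right R 0) <| huf.mono fun x hx ↦ by
      rw [hx]
      exact (hR f hf x).trans (le_max_left R 0)
    simpa [measureUnivNNReal] using this
  have hDmid (n) (u) (hu : u ∈ D (n + 1)) (v) (hv : v ∈ D (n + 1)) :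
      (2⁻¹ : ℝ) • (u + v) ∈ D n := by
    obtain ⟨f, hf, huf⟩ := hu
    obtain ⟨g, hg, hvg⟩ := hv
    refine ⟨_, hmid n f hf g hg, ?_⟩
    filter_upwards [Lp.coeFn_smul (2⁻¹ : ℝ) (u + v), Lp.coeFn_add u v, huf, hvg]
      with x hsmul hadd hu hv
    simp only [hsmul, hadd, hu, hv, Pi.smul_apply, Pi.add_apply]
  obtain ⟨u, huD, w, hw⟩ := exists_tendsto_of_midpoint_mem hDanti hDne hDR hDmid
  choose f hfC hf using huD
  refine ⟨f, hfC, w, Lp.stronglyMeasurable w, (Lp.memLp w).integrable one_le_two,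
    squeeze_zero (fun n ↦ by positivity) (fun n ↦ ?_) (tendsto_iff_norm_sub_tendsto_zero.1 hw)⟩
  refine (integral_congr_ae ?_).trans_le (integral_norm_le_norm_L2 (u n - w))
  filter_upwards [Lp.coeFn_sub (u n) w, hf n] with x hsub hu
  rw [hsub, Pi.sub_apply, hu]

end Midpoints

section Sampling

variable {R H : Type*} [Fintype R] [NormedAddCommGroup H] [InnerProductSpace ℝ H]

lemma sum_norm_sum_sample_sq {Z : R → H} (hZ : ∑ r, Z r = 0) (q : ℕ) :
    (∑ ρ : Fin q → R, ‖∑ i, Z (ρ i)‖ ^ 2) * Fintype.card R =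
      q * (Fintype.card R : ℝ) ^ q * ∑ r, ‖Z r‖ ^ 2 := by
  induction q with
  | zero => simp
  | succ q ih =>
    have hsplit : ∑ ρ : Fin (q + 1) → R, ‖∑ i, Z (ρ i)‖ ^ 2 =
        ∑ a, ∑ ρ : Fin q → R, ‖Z a + ∑ i, Z (ρ i)‖ ^ 2 := by
      rw [← Fintype.sum_prod_type', ← (Fin.consEquiv fun _ : Fin (q + 1) ↦ R).sum_comp]
      refine Finset.sum_congr rfl fun x _ ↦ ?_
      simp [Fin.sum_univ_succ, Fin.consEquiv]
    have hcross : ∑ a, ∑ ρ : Fin q → R, inner ℝ (Z a) (∑ i, Z (ρ i)) = 0 := by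
      simp only [← inner_sum]
      rw [← sum_inner, hZ, inner_zero_left]
    rw [hsplit]
    simp only [norm_add_sq_real, Finset.sum_add_distrib, ← Finset.mul_sum, hcross, Finset.sum_const,
      Finset.card_univ, nsmul_eq_mul, Fintype.card_fun, Fintype.card_fin]
    push_cast
    linear_combination (Fintype.card R : ℝ) * ih

lemma sum_norm_sub_sq_le {Y : R → H} {a : H} (hY : ∑ r, Y r = (Fintype.card R : ℝ) • a) :
    ∑ r, ‖Y r - a‖ ^ 2 ≤ ∑ r, ‖Y r‖ ^ 2 := by
  have hsum : ∑ r, ‖Y r - a‖ ^ 2 = ∑ r, ‖Y r‖ ^ 2 - Fintype.card R * ‖a‖ ^ 2 := by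
    simp only [norm_sub_sq_real, Finset.sum_add_distrib, Finset.sum_sub_distrib,
      ← Finset.mul_sum, ← sum_inner, hY, real_inner_smul_left, real_inner_self_eq_norm_sq,
      Finset.sum_const, Finset.card_univ, nsmul_eq_mul]
    ring
  rw [hsum]
  exact sub_le_self _ (by positivity)

lemma sum_norm_sub_sample_mean_le [Nonempty R] {Y : R → H} {a : H} {B ε : ℝ}
    (hY : ∑ r, Y r = (Fintype.card R : ℝ) • a) (hB : ∑ r, ‖Y r‖ ^ 2 ≤ B * Fintype.card R)
    {q : ℕ} (hq : 0 < q) (hε : 0 ≤ ε) (hBε : B ≤ q * ε ^ 2) :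
    ∑ ρ : Fin q → R, ‖a - (q : ℝ)⁻¹ • ∑ i, Y (ρ i)‖ ≤ ε * (Fintype.card R : ℝ) ^ q := by
  have hR : (0 : ℝ) < Fintype.card R := Nat.cast_pos.2 Fintype.card_pos
  have hq₀ : (0 : ℝ) < q := Nat.cast_pos.2 hq
  have hZ : ∑ r, (Y r - a) = 0 := by
    rw [Finset.sum_sub_distrib, hY, Finset.sum_const, Finset.card_univ, Nat.cast_smul_eq_nsmul,
      sub_self]
  have hvar : ∑ ρ : Fin q → R, ‖∑ i, (Y (ρ i) - a)‖ ^ 2 ≤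
      q * (Fintype.card R : ℝ) ^ q * (q * ε ^ 2) := by
    refine le_of_mul_le_mul_right ?_ hR
    rw [sum_norm_sum_sample_sq hZ, mul_assoc (_ * _)]
    gcongr
    exact (sum_norm_sub_sq_le hY).trans (hB.trans (by gcongr))
  have herr (ρ : Fin q → R) : ‖a - (q : ℝ)⁻¹ • ∑ i, Y (ρ i)‖ ^ 2 =
      ((q : ℝ) ^ 2)⁻¹ * ‖∑ i, (Y (ρ i) - a)‖ ^ 2 := by
    have : a - (q : ℝ)⁻¹ • ∑ i, Y (ρ i) = -((q : ℝ)⁻¹ • ∑ i, (Y (ρ i) - a)) := by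
      rw [Finset.sum_sub_distrib, Finset.sum_const, Finset.card_univ, Fintype.card_fin, smul_sub,
        ← Nat.cast_smul_eq_nsmul ℝ, inv_smul_smul₀ hq₀.ne', neg_sub]
    rw [this, norm_neg, norm_smul, mul_pow, Real.norm_eq_abs, sq_abs, inv_pow]
  refine le_of_sq_le_sq ?_ (by positivity)
  calc (∑ ρ : Fin q → R, ‖a - (q : ℝ)⁻¹ • ∑ i, Y (ρ i)‖) ^ 2
      ≤ (Fintype.card R : ℝ) ^ q * ∑ ρ : Fin q → R, ‖a - (q : ℝ)⁻¹ • ∑ i, Y (ρ i)‖ ^ 2 := by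
        refine sq_sum_le_card_mul_sum_sq.trans_eq ?_
        simp
    _ ≤ (Fintype.card R : ℝ) ^ q *
          (((q : ℝ) ^ 2)⁻¹ * (q * (Fintype.card R : ℝ) ^ q * (q * ε ^ 2))) := by
        simp only [herr, ← Finset.mul_sum]
        gcongr
    _ = (ε * (Fintype.card R : ℝ) ^ q) ^ 2 := by
        field_simp

end Sampling

section ApproxCode

open Filter

variable {G X V : Type*} [Group G] [MulAction G X] [MeasurableSpace X] [NormedAddCommGroup V]

/-- The expected error, totalled over the sites `t ∈ E`, of predicting `f (t • x)` by the entry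
at `t` of the word `τ i : G → V`, where `i = Φ x` is the index assigned to `x`. -/
noncomputable def codeError {ι : Type*} (μ : Measure X) (f : X → V) (E : Finset G) (Φ : X → ι)
    (τ : ι → G → V) : ℝ :=
  ∑ t ∈ E, ∫ x, ‖f (t • x) - τ (Φ x) t‖ ∂μ

variable (G) in
/-- `f` has codes of rate `c` and error `ε`: along sufficiently invariant `E`, the values
`f (t • x)` with `t ∈ E` can be predicted with mean error at most `ε` per site from an index
depending measurably on `x` that takes at most `exp (c * |E|)` values. -/
def ApproxCode (μ : Measure X) (f : X → V) (ε c : ℝ) : Prop :=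
  ∀ᶠ E in folnerFilter G, ∃ (N : ℕ) (Φ : X → Fin N) (τ : Fin N → G → V), Measurable Φ ∧
    (N : ℝ) ≤ Real.exp (c * E.card) ∧ codeError μ f E Φ τ ≤ ε * E.card

variable {μ : Measure X} {f g : X → V} {ε ε' c c' : ℝ} {ι ι' : Type*} {Φ : X → ι} {Φ' : X → ι'}

lemma codeError_equiv_comp (e : ι ≃ ι') (f : X → V) (E : Finset G) (τ : ι → G → V) :
    codeError μ f E (e ∘ Φ) (τ ∘ e.symm) = codeError μ f E Φ τ := by
  simp only [codeError, Function.comp_apply, Equiv.symm_apply_apply]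

lemma ApproxCode.mono (h : ApproxCode G μ f ε c) (hε : ε ≤ ε') (hc : c ≤ c') :
    ApproxCode G μ f ε' c' :=
  Eventually.mono h fun E ⟨N, Φ, τ, hΦ, hN, herr⟩ ↦
    ⟨N, Φ, τ, hΦ, hN.trans (by gcongr), herr.trans (by gcongr)⟩

variable [MeasurableConstSMul G X] [SMulInvariantMeasure G X μ]

lemma integrable_comp_const_smul (hf : Integrable f μ) (t : G) :
    Integrable (fun x ↦ f (t • x)) μ :=
  (measurePreserving_smul t μ).integrable_comp_of_integrable hf

variable [IsFiniteMeasure μ] [Finite ι] [MeasurableSpace ι] [MeasurableSingletonClass ι]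
  [Finite ι'] [MeasurableSpace ι'] [MeasurableSingletonClass ι']

lemma integrable_smul_sub_comp (hf : Integrable f μ) (t : G) (hΦ : Measurable Φ) (v : ι → V) :
    Integrable (fun x ↦ f (t • x) - v (Φ x)) μ := by
  have : IsFiniteMeasure (μ.map Φ) := Measure.isFiniteMeasure_map μ Φ
  exact (integrable_comp_const_smul hf t).sub
    ((Integrable.of_finite (f := v) (μ := μ.map Φ)).comp_measurable hΦ :)

lemma codeError_le_add (hf : Integrable f μ) (hg : Integrable g μ) (E : Finset G)
    (hΦ : Measurable Φ) (τ : ι → G → V) :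
    codeError μ f E Φ τ ≤ codeError μ g E Φ τ + (∫ x, ‖f x - g x‖ ∂μ) * E.card := by
  have hsite (t : G) : ∫ x, ‖f (t • x) - τ (Φ x) t‖ ∂μ ≤
      ∫ x, ‖g (t • x) - τ (Φ x) t‖ ∂μ + ∫ x, ‖f x - g x‖ ∂μ := by
    rw [← (measurePreserving_smul t μ).integral_comp (measurableEmbedding_const_smul t)
      fun x ↦ ‖f x - g x‖]
    have hg' := integrable_smul_sub_comp hg t hΦ (τ · t)
    have hfg : Integrable (fun x ↦ f (t • x) - g (t • x)) μ :=
      integrable_comp_const_smul (hf.sub hg) t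
    rw [← integral_add hg'.norm hfg.norm]
    refine integral_mono (integrable_smul_sub_comp hf t hΦ (τ · t)).norm
      (hg'.norm.add hfg.norm) fun x ↦ ?_
    exact (norm_sub_le_norm_sub_add_norm_sub _ (g (t • x)) _).trans_eq (add_comm _ _)
  refine (Finset.sum_le_sum fun t _ ↦ hsite t).trans_eq ?_
  rw [Finset.sum_add_distrib, Finset.sum_const, nsmul_eq_mul, mul_comm, codeError]

lemma ApproxCode.of_integral_norm_sub_le (h : ApproxCode G μ g ε c) (hf : Integrable f μ)
    (hg : Integrable g μ) {η : ℝ} (hfg : ∫ x, ‖f x - g x‖ ∂μ ≤ η) :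
    ApproxCode G μ f (ε + η) c :=
  Eventually.mono h fun E ⟨N, Φ, τ, hΦ, hN, herr⟩ ↦ ⟨N, Φ, τ, hΦ, hN,
    (codeError_le_add hf hg E hΦ τ).trans <| by rw [add_mul]; gcongr⟩

variable [NormedSpace ℝ V]

lemma codeError_midpoint_le (hf : Integrable f μ) (hg : Integrable g μ) (E : Finset G)
    (hΦ : Measurable Φ) (hΦ' : Measurable Φ') (τ : ι → G → V) (τ' : ι' → G → V) :
    codeError μ ((2⁻¹ : ℝ) • (f + g)) E (fun x ↦ (Φ x, Φ' x))
        (fun i t ↦ (2⁻¹ : ℝ) • (τ i.1 t + τ' i.2 t)) ≤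
      2⁻¹ * (codeError μ f E Φ τ + codeError μ g E Φ' τ') := by
  simp only [codeError, ← Finset.sum_add_distrib, Finset.mul_sum,
    Pi.smul_apply, Pi.add_apply]
  refine Finset.sum_le_sum fun t _ ↦ ?_
  have hf' := (integrable_smul_sub_comp hf t hΦ (τ · t)).norm
  have hg' := (integrable_smul_sub_comp hg t hΦ' (τ' · t)).norm
  rw [← integral_add hf' hg', ← integral_const_mul]
  refine integral_mono_of_nonneg (.of_forall fun x ↦ norm_nonneg _)
    ((hf'.add hg').const_mul _) (.of_forall fun x ↦ ?_)
  dsimp only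
  rw [← smul_sub, add_sub_add_comm, norm_smul, Real.norm_of_nonneg (by norm_num)]
  gcongr
  exact norm_add_le _ _

lemma ApproxCode.midpoint (hf : Integrable f μ) (hg : Integrable g μ)
    (hfc : ApproxCode G μ f ε c) (hgc : ApproxCode G μ g ε' c') :
    ApproxCode G μ ((2⁻¹ : ℝ) • (f + g)) (2⁻¹ * (ε + ε')) (c + c') := by
  filter_upwards [hfc, hgc] with E ⟨N, Φ, τ, hΦ, hN, herr⟩ ⟨N', Φ', τ', hΦ', hN', herr'⟩
  refine ⟨N * N', _, _, (measurable_of_countable finProdFinEquiv).comp (hΦ.prodMk hΦ'), ?_,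
    (codeError_equiv_comp finProdFinEquiv _ E _).trans_le
      ((codeError_midpoint_le hf hg E hΦ hΦ' τ τ').trans ?_)⟩
  · rw [Nat.cast_mul, add_mul, Real.exp_add]
    gcongr
  · rw [mul_assoc, add_mul]
    gcongr

end ApproxCode

section TileInterior

open Filter

variable {G : Type*} [Group G] {F E : Finset G} {t : G}

/-- The sites `t ∈ E` at which averaging over the tile `F` only involves sites `s⁻¹ * t` of `E`. -/
noncomputable def tileInterior (F E : Finset G) : Finset G :=
  E.filter fun t ↦ ∀ s ∈ F, s⁻¹ * t ∈ E

lemma tileInterior_subset : tileInterior F E ⊆ E := Finset.filter_subset _ _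

lemma inv_mul_mem_of_mem_tileInterior (ht : t ∈ tileInterior F E) {s : G} (hs : s ∈ F) :
    s⁻¹ * t ∈ E :=
  (Finset.mem_filter.1 ht).2 s hs

lemma card_le_card_of_mem_tileInterior (ht : t ∈ tileInterior F E) : F.card ≤ E.card :=
  Finset.card_le_card_of_injOn (fun s ↦ s⁻¹ * t) (fun _ ↦ inv_mul_mem_of_mem_tileInterior ht)
    fun a _ b _ h ↦ by simpa using h

lemma eventually_card_tileInterior (F : Finset G) {ε : ℝ} (hε : 0 < ε) :
    ∀ᶠ E in folnerFilter G, (1 - ε) * E.card ≤ ((tileInterior F E).card : ℝ) := by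
  filter_upwards [eventually_folnerInv (F.image (·⁻¹)) hε] with E hE
  refine hE.2.trans_eq ?_
  rw [← Set.ncard_coe_finset]
  congr 2
  ext t
  simp [tileInterior]

lemma eventually_card_le_card (F : Finset G) : ∀ᶠ E in folnerFilter G, F.card ≤ E.card := by
  filter_upwards [eventually_card_tileInterior F (by norm_num : (0 : ℝ) < 1 / 2),
    eventually_folnerFilter_nonempty] with E hE hne
  have hpos : (0 : ℝ) < E.card := Nat.cast_pos.2 hne.card_pos
  obtain ⟨t, ht⟩ : (tileInterior F E).Nonempty := by
    rw [← Finset.card_pos, ← Nat.cast_pos (α := ℝ)]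
    linarith
  exact card_le_card_of_mem_tileInterior ht

lemma sum_ite_mul_inv_mem {M : Type*} [AddCommMonoid M] (ht : t ∈ tileInterior F E) (h : G → M) :
    ∑ r : E, (if t * (r : G)⁻¹ ∈ F then h (t * (r : G)⁻¹) else 0) = ∑ s ∈ F, h s := by
  rw [Finset.sum_coe_sort E fun r ↦ if t * r⁻¹ ∈ F then h (t * r⁻¹) else 0, ← Finset.sum_filter]
  refine Finset.sum_nbij' (fun r ↦ t * r⁻¹) (fun s ↦ s⁻¹ * t) ?_ ?_ ?_ ?_ fun _ _ ↦ rfl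
  · exact fun r hr ↦ (Finset.mem_filter.1 hr).2
  · exact fun s hs ↦
      Finset.mem_filter.2 ⟨inv_mul_mem_of_mem_tileInterior ht hs, by simpa using hs⟩
  · simp
  · simp

end TileInterior

section TileAverage

variable {G X V : Type*} [Group G] [MulAction G X] [NormedAddCommGroup V] {N : ℕ}

section NormedSpace

variable [NormedSpace ℝ V]

/-- The average over the tile `F` of the letters that the words `τ i`, placed along the orbit of
`x` at its translates by `F⁻¹` according to the indices given by `Φ`, assign to `x`. -/
noncomputable def tileAverage (F : Finset G) (Φ : X → Fin N) (τ : Fin N → G → V) (x : X) : V :=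
  (F.card : ℝ)⁻¹ • ∑ s ∈ F, τ (Φ (s⁻¹ • x)) s

/-- The letter that the word of index `i` predicts at `t` when it is placed on the translate `F * r`
of the tile `F`, and zero when `t` lies outside this translate. -/
noncomputable def tileVote (F : Finset G) (τ : Fin N → G → V) (t r : G) (i : Fin N) : V :=
  if t * r⁻¹ ∈ F then τ i (t * r⁻¹) else 0

/-- The estimate of `tileAverage F Φ τ (t • x)` from the words of indices `i a` placed at sampled
sites `ρ a ∈ E`. The votes are rescaled since only `|F|` of the `|E|` sites have a vote at `t`. -/
noncomputable def sampleEstimate (F E : Finset G) (τ : Fin N → G → V) {q : ℕ} (ρ : Fin q → E)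
    (i : Fin q → Fin N) (t : G) : V :=
  if t ∈ tileInterior F E then
    (q : ℝ)⁻¹ • ∑ a, (E.card / F.card : ℝ) • tileVote F τ t (ρ a) (i a)
  else 0

variable {F E : Finset G} {Φ : X → Fin N} {τ : Fin N → G → V}

lemma norm_tileAverage_le (hτ : ∀ i s, ‖τ i s‖ ≤ 1) (x : X) : ‖tileAverage F Φ τ x‖ ≤ 1 := by
  rw [tileAverage, norm_smul, norm_inv, Real.norm_natCast]
  refine inv_mul_le_one_of_le₀ ((norm_sum_le_of_le F fun s _ ↦ hτ _ s).trans_eq ?_)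
    F.card.cast_nonneg
  simp

lemma integrable_tileAverage [MeasurableSpace X] [MeasurableConstSMul G X] {μ : Measure X}
    [IsFiniteMeasure μ] [SMulInvariantMeasure G X μ] (hΦ : Measurable Φ) :
    Integrable (tileAverage F Φ τ) μ := by
  have : IsFiniteMeasure (μ.map Φ) := Measure.isFiniteMeasure_map μ Φ
  refine (integrable_finsetSum F fun s _ ↦ ?_).smul (F.card : ℝ)⁻¹
  exact integrable_comp_const_smul
    ((Integrable.of_finite (f := (τ · s)) (μ := μ.map Φ)).comp_measurable hΦ) s⁻¹

lemma sum_tileVote {t : G} (ht : t ∈ tileInterior F E) (x : X) :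
    ∑ r : E, (E.card / F.card : ℝ) • tileVote F τ t r (Φ ((r : G) • x)) =
      (E.card : ℝ) • tileAverage F Φ τ (t • x) := by
  have hsum := sum_ite_mul_inv_mem ht fun s ↦ τ (Φ (s⁻¹ • t • x)) s
  simp only [smul_smul, mul_inv_rev, inv_inv, inv_mul_cancel_right] at hsum
  simp only [tileVote, tileAverage, ← Finset.smul_sum, hsum, smul_smul, div_eq_mul_inv]

lemma sum_norm_tileVote_sq_le {t : G} (hF : F.Nonempty) (ht : t ∈ tileInterior F E)
    (hτ : ∀ i s, ‖τ i s‖ ≤ 1) (i : E → Fin N) :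
    ∑ r : E, ‖(E.card / F.card : ℝ) • tileVote F τ t r (i r)‖ ^ 2 ≤
      E.card / F.card * E.card := by
  have hF₀ : (F.card : ℝ) ≠ 0 := Nat.cast_ne_zero.2 hF.card_ne_zero
  have hvote (r : E) : ‖(E.card / F.card : ℝ) • tileVote F τ t r (i r)‖ ^ 2 ≤
      if t * (r : G)⁻¹ ∈ F then (E.card / F.card : ℝ) ^ 2 else 0 := by
    rw [tileVote]
    split_ifs with h
    · rw [norm_smul, mul_pow, Real.norm_eq_abs, sq_abs]
      exact mul_le_of_le_one_right (by positivity) (pow_le_one₀ (norm_nonneg _) (hτ _ _))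
    · simp
  refine (Finset.sum_le_sum fun r _ ↦ hvote r).trans_eq ?_
  rw [sum_ite_mul_inv_mem ht fun _ ↦ (E.card / F.card : ℝ) ^ 2, Finset.sum_const, nsmul_eq_mul]
  field_simp

end NormedSpace

variable [InnerProductSpace ℝ V] {F E : Finset G} {Φ : X → Fin N} {τ : Fin N → G → V} {q : ℕ}
  {ε : ℝ}

lemma sum_norm_tileAverage_sub_sampleEstimate_le (hF : F.Nonempty) (hE : E.Nonempty)
    (hτ : ∀ i s, ‖τ i s‖ ≤ 1) (hq : 0 < q) (hε : 0 ≤ ε) (hqε : E.card / F.card ≤ q * ε ^ 2)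
    (t : G) (x : X) :
    ∑ ρ : Fin q → E, ‖tileAverage F Φ τ (t • x) -
        sampleEstimate F E τ ρ (fun a ↦ Φ ((ρ a : G) • x)) t‖ ≤
      (if t ∈ tileInterior F E then ε else 1) * (E.card : ℝ) ^ q := by
  simp only [sampleEstimate]
  split_ifs with ht
  · have : Nonempty E := hE.coe_sort
    have := sum_norm_sub_sample_mean_le (R := E) (q := q) (ε := ε)
      (Y := fun r ↦ (E.card / F.card : ℝ) • tileVote F τ t r (Φ ((r : G) • x)))
      ((sum_tileVote ht x).trans (by rw [Fintype.card_coe]))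
      ((sum_norm_tileVote_sq_le hF ht hτ _).trans_eq (by rw [Fintype.card_coe])) hq hε hqε
    rwa [Fintype.card_coe] at this
  · simp only [sub_zero]
    refine (Finset.sum_le_card_nsmul _ _ 1 fun ρ _ ↦ norm_tileAverage_le hτ _).trans_eq ?_
    simp

variable [MeasurableSpace X] [MeasurableConstSMul G X] {μ : Measure X} [IsProbabilityMeasure μ]
  [SMulInvariantMeasure G X μ]

lemma measurable_sampleCode (hΦ : Measurable Φ) (ρ : Fin q → E) :
    Measurable fun (x : X) (a : Fin q) ↦ Φ ((ρ a : G) • x) :=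
  measurable_pi_lambda _ fun a ↦ hΦ.comp (measurable_const_smul (ρ a : G))

lemma sum_integral_norm_tileAverage_sub_sampleEstimate_le (hF : F.Nonempty) (hE : E.Nonempty)
    (hΦ : Measurable Φ) (hτ : ∀ i s, ‖τ i s‖ ≤ 1) (hq : 0 < q) (hε : 0 ≤ ε)
    (hqε : E.card / F.card ≤ q * ε ^ 2) (t : G) :
    ∑ ρ : Fin q → E, ∫ x, ‖tileAverage F Φ τ (t • x) -
        sampleEstimate F E τ ρ (fun a ↦ Φ ((ρ a : G) • x)) t‖ ∂μ ≤
      (if t ∈ tileInterior F E then ε else 1) * (E.card : ℝ) ^ q := by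
  have hint (ρ : Fin q → E) := (integrable_smul_sub_comp
    (integrable_tileAverage (F := F) (τ := τ) (μ := μ) hΦ) t
    (measurable_sampleCode hΦ ρ) (sampleEstimate F E τ ρ · t)).norm
  rw [← integral_finsetSum _ fun ρ _ ↦ hint ρ]
  refine (integral_mono (integrable_finsetSum _ fun ρ _ ↦ hint ρ) (integrable_const _) fun x ↦
    sum_norm_tileAverage_sub_sampleEstimate_le hF hE hτ hq hε hqε t x).trans_eq ?_
  simp

lemma exists_codeError_sampleEstimate_le (hF : F.Nonempty) (hE : E.Nonempty)
    (hFE : (1 - ε) * E.card ≤ ((tileInterior F E).card : ℝ)) (hΦ : Measurable Φ)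
    (hτ : ∀ i s, ‖τ i s‖ ≤ 1) (hq : 0 < q) (hε : 0 ≤ ε) (hqε : E.card / F.card ≤ q * ε ^ 2) :
    ∃ ρ : Fin q → E, codeError μ (tileAverage F Φ τ) E (fun x a ↦ Φ ((ρ a : G) • x))
      (sampleEstimate F E τ ρ) ≤ 2 * ε * E.card := by
  have hsites : ∑ t ∈ E, (if t ∈ tileInterior F E then ε else 1) ≤ 2 * ε * E.card := by
    rw [← Finset.sum_sdiff (tileInterior_subset (F := F) (E := E)),
      Finset.sum_congr rfl fun t ht ↦ if_neg (Finset.mem_sdiff.1 ht).2,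
      Finset.sum_congr rfl fun t ht ↦ if_pos ht, Finset.sum_const, Finset.sum_const,
      nsmul_eq_mul, nsmul_eq_mul, Finset.cast_card_sdiff tileInterior_subset]
    have := mul_le_mul_of_nonneg_right
      (Nat.cast_le (α := ℝ).2 (Finset.card_le_card (tileInterior_subset (F := F) (E := E)))) hε
    linarith
  have : Nonempty E := hE.coe_sort
  suffices h : ∑ ρ : Fin q → E, codeError μ (tileAverage F Φ τ) E
      (fun x a ↦ Φ ((ρ a : G) • x)) (sampleEstimate F E τ ρ) ≤
      ∑ _ρ : Fin q → E, 2 * ε * E.card by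
    obtain ⟨ρ, -, hρ⟩ := Finset.exists_le_of_sum_le Finset.univ_nonempty h
    exact ⟨ρ, hρ⟩
  simp only [codeError]
  rw [Finset.sum_comm]
  refine (Finset.sum_le_sum fun t _ ↦ sum_integral_norm_tileAverage_sub_sampleEstimate_le hF hE
    hΦ hτ hq hε hqε t).trans ?_
  rw [← Finset.sum_mul, Finset.sum_const, Finset.card_univ, Fintype.card_fun, Fintype.card_coe,
    Fintype.card_fin, nsmul_eq_mul, Nat.cast_pow, mul_comm]
  gcongr

lemma approxCode_tileAverage (hF : F.Nonempty) (hΦ : Measurable Φ) (hτ : ∀ i s, ‖τ i s‖ ≤ 1)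
    {c : ℝ} (hc : 0 ≤ c) (hN : (N : ℝ) ≤ Real.exp (c * F.card)) (hε : 0 < ε) :
    ApproxCode G μ (tileAverage F Φ τ) (2 * ε) ((ε⁻¹ ^ 2 + 1) * c) := by
  filter_upwards [eventually_card_tileInterior F hε, eventually_card_le_card F,
    eventually_folnerFilter_nonempty] with E hFE hcard hE
  have : (0 : ℝ) < F.card := Nat.cast_pos.2 hF.card_pos
  have : (0 : ℝ) < E.card := Nat.cast_pos.2 hE.card_pos
  let q : ℕ := ⌈(E.card / F.card : ℝ) * ε⁻¹ ^ 2⌉₊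
  have hqε : (E.card / F.card : ℝ) ≤ q * ε ^ 2 := by
    rw [← div_le_iff₀ (by positivity), div_eq_mul_inv _ (ε ^ 2), ← inv_pow]
    exact Nat.le_ceil _
  have hqF : (F.card : ℝ) * q ≤ (ε⁻¹ ^ 2 + 1) * E.card := by
    calc (F.card : ℝ) * q ≤ F.card * (E.card / F.card * ε⁻¹ ^ 2 + 1) := by
          gcongr
          exact (Nat.ceil_lt_add_one (by positivity)).le
      _ = ε⁻¹ ^ 2 * E.card + F.card := by field_simp
      _ ≤ (ε⁻¹ ^ 2 + 1) * E.card := by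
          rw [add_one_mul]
          gcongr
  obtain ⟨ρ, hρ⟩ := exists_codeError_sampleEstimate_le (μ := μ) hF hE hFE hΦ hτ
    (Nat.ceil_pos.2 (by positivity)) hε.le hqε
  refine ⟨N ^ q, _, _, (measurable_of_countable finFunctionFinEquiv).comp
    (measurable_sampleCode hΦ ρ), ?_, (codeError_equiv_comp finFunctionFinEquiv _ E _).trans_le hρ⟩
  calc ((N ^ q : ℕ) : ℝ) ≤ Real.exp (c * F.card) ^ q := by
        rw [Nat.cast_pow]
        gcongr
    _ = Real.exp (c * (F.card * q)) := by rw [← Real.exp_nat_mul, mul_left_comm, mul_comm (q : ℝ)]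
    _ ≤ Real.exp ((ε⁻¹ ^ 2 + 1) * c * E.card) := by
        rw [mul_right_comm, mul_comm c]
        gcongr

end TileAverage

section AvoidingCode

open Filter

variable {G X : Type*} [Group G] [MulAction G X] {l : ℕ} {U : Fin l → Set X}

/-- The index of the member of the disjoint family `U` that contains `y`, if there is one. -/
noncomputable def hitLabel (U : Fin l → Set X) (y : X) : Option (Fin l) :=
  if h : ∃ j, y ∈ U j then some h.choose else none

lemma hitLabel_eq_some_iff (hUd : Pairwise fun i j ↦ Disjoint (U i) (U j)) {y : X} {j : Fin l} :
    hitLabel U y = some j ↔ y ∈ U j := by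
  by_cases h : ∃ j, y ∈ U j
  · rw [hitLabel, dif_pos h, Option.some_inj]
    refine ⟨fun hj ↦ hj ▸ h.choose_spec, fun hy ↦ ?_⟩
    by_contra hne
    exact Set.disjoint_left.1 (hUd hne) h.choose_spec hy
  · simp only [hitLabel, dif_neg h, reduceCtorEq, false_iff]
    exact fun hy ↦ h ⟨j, hy⟩

lemma indepRel_of_shattersPartial (hUd : Pairwise fun i j ↦ Disjoint (U i) (U j)) {D : Set X}
    {J : Finset G} (hJ : ShattersPartial ((fun x s ↦ hitLabel U (s • x)) '' D) J) :
    IndepRel U (fun _ ↦ D) (J : Set G) := by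
  intro F hFJ _ σ
  obtain ⟨_, ⟨x, hx, rfl⟩, h⟩ := hJ σ
  exact ⟨x, mem_iInter₂.2 fun s hs ↦ ⟨hx, (hitLabel_eq_some_iff hUd).1 (h s (hFJ hs))⟩⟩

lemma measurable_comp_setOf_mem {ι β : Type*} [Finite ι] [MeasurableSpace β] [MeasurableSpace X]
    {A : ι → Set X} (hA : ∀ i, MeasurableSet (A i)) (s : Set ι → β) :
    Measurable fun x ↦ s {i | x ∈ A i} :=
  (measurable_of_countable fun p : ι → Prop ↦ s {i | p i}).comp
    (measurable_pi_lambda _ fun i ↦ (hA i).mem)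

variable [MeasurableSpace X] {μ : Measure X} [IsProbabilityMeasure μ] {δ c : ℝ}

lemma exists_avoidingCover_of_not_upperIndepDens_pos (hamen : FolnerAmenable G) (hl : 2 ≤ l)
    (hUd : Pairwise fun i j ↦ Disjoint (U i) (U j)) (hU : ¬ 0 < upperIndepDens G μ U)
    (hδ : 0 < δ) (hc : 0 < c) :
    ∃ F : Finset G, F.Nonempty ∧ ∃ D : Set X, MeasurableSet D ∧ 1 - δ ≤ μ.real D ∧
      ∃ T, AvoidingCover ((fun x s ↦ hitLabel U (s • x)) '' D) F T ∧
        (T.card : ℝ) ≤ Real.exp (c * F.card) := by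
  have : Nontrivial (Fin l) := Fin.nontrivial_iff_two_le.2 hl
  obtain ⟨η, hη, hcover⟩ := exists_avoidingCover_card_le_exp (Fin l) hc
  have hfew : ∀ᶠ F in folnerFilter G, (phiConst μ U δ F : ℝ) < η * F.card := by
    have := fun h ↦ hU (upperIndepDens_pos_iff.2 ⟨δ, hδ, η, hη, h⟩)
    exact (not_frequently.1 this).mono fun F hF ↦ not_le.1 hF
  have := hamen.neBot_folnerFilter
  obtain ⟨F, hF, hne⟩ := (hfew.and eventually_folnerFilter_nonempty).exists
  rw [← not_le, le_phiConst_iff hδ.le] at hF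
  push Not at hF
  obtain ⟨D, hD, hμD, hJ⟩ := hF
  exact ⟨F, hne, D, hD, hμD, hcover F _ fun J hJF hJ' ↦
    (hJ J hJF (indepRel_of_shattersPartial hUd hJ')).le⟩

lemma exists_avoiding_code [MeasurableConstSMul G X] (hamen : FolnerAmenable G) (hl : 2 ≤ l)
    (hUm : ∀ j, MeasurableSet (U j)) (hUd : Pairwise fun i j ↦ Disjoint (U i) (U j))
    (hU : ¬ 0 < upperIndepDens G μ U) (hδ : 0 < δ) (hδ₁ : δ < 1) (hc : 0 < c) :
    ∃ F : Finset G, F.Nonempty ∧ ∃ D : Set X, MeasurableSet D ∧ 1 - δ ≤ μ.real D ∧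
      ∃ (N : ℕ) (Φ : X → Fin N) (τ : Fin N → G → Fin l), Measurable Φ ∧
        (N : ℝ) ≤ Real.exp (c * F.card) ∧ ∀ x ∈ D, ∀ s ∈ F, s • x ∉ U (τ (Φ x) s) := by
  obtain ⟨F, hF, D, hD, hμD, T, hT, hcard⟩ :=
    exists_avoidingCover_of_not_upperIndepDens_pos hamen hl hUd hU hδ hc
  have avoid {x} (hx : x ∈ D) : ∃ τ ∈ T, ∀ s ∈ F, s • x ∉ U (τ s) := by
    obtain ⟨τ, hτ, hav⟩ := hT _ ⟨x, hx, rfl⟩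
    exact ⟨τ, hτ, fun s hs h ↦ hav s hs ((hitLabel_eq_some_iff hUd).2 h)⟩
  have hDne : D.Nonempty := nonempty_of_measureReal_ne_zero (μ := μ) (by linarith)
  have : Nonempty (Fin T.card) := by
    obtain ⟨τ, hτ, -⟩ := avoid hDne.some_mem
    exact ⟨T.equivFin ⟨τ, hτ⟩⟩
  let word (i : Fin T.card) : G → Fin l := T.equivFin.symm i
  let A (i : Fin T.card) : Set X := {x | ∀ s ∈ F, s • x ∉ U (word i s)}
  have hA (i) : MeasurableSet (A i) := by
    have : A i = ⋂ s ∈ F, (s • · : X → X) ⁻¹' (U (word i s))ᶜ := by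
      ext x
      simp [A]
    rw [this]
    exact Finset.measurableSet_biInter _ fun s _ ↦ measurable_const_smul s (hUm _).compl
  refine ⟨F, hF, D, hD, hμD, T.card, fun x ↦ Classical.epsilon fun i ↦ i ∈ {i | x ∈ A i}, word,
    measurable_comp_setOf_mem hA fun S ↦ Classical.epsilon (· ∈ S), hcard, fun x hx ↦ ?_⟩
  obtain ⟨τ, hτ, hav⟩ := avoid hx
  have hex : ∃ i, i ∈ {i | x ∈ A i} := ⟨T.equivFin ⟨τ, hτ⟩, by simpa [A, word] using hav⟩
  exact Classical.epsilon_spec hex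

end AvoidingCode

section PartitionOfUnity

open Filter Topology

lemma norm_le_one_of_mem_stdSimplex {ι : Type*} [Fintype ι] {v : EuclideanSpace ℝ ι}
    (hv : ⇑v ∈ stdSimplex ℝ ι) : ‖v‖ ≤ 1 := by
  refine EuclideanSpace.norm_eq v ▸ Real.sqrt_le_one.2 (hv.2 ▸ Finset.sum_le_sum fun j _ ↦ ?_)
  rw [Real.norm_eq_abs, sq_abs]
  exact pow_le_of_le_one (hv.1 j) (mem_Icc_of_mem_stdSimplex hv j).2 two_ne_zero

lemma ae_apply_eq_of_tendsto_integral {X V : Type*} [MeasurableSpace X] {ν : Measure X}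
    [IsFiniteMeasure ν] [NormedAddCommGroup V] [NormedSpace ℝ V] {f : ℕ → X → V} {w : X → V}
    (hf : ∀ n, Integrable (f n) ν) (hw : Integrable w ν)
    (hfw : Tendsto (fun n ↦ ∫ x, ‖f n x - w x‖ ∂ν) atTop (𝓝 0)) (ℓ : V →L[ℝ] ℝ) {c : ℝ}
    (hℓ : Tendsto (fun n ↦ ∫ x, |ℓ (f n x) - c| ∂ν) atTop (𝓝 0)) : ∀ᵐ x ∂ν, ℓ (w x) = c := by
  have hint {g : X → V} (hg : Integrable g ν) : Integrable (fun x ↦ |ℓ (g x) - c|) ν :=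
    ((ℓ.integrable_comp hg).sub (integrable_const c)).abs
  have hle (n) : ∫ x, |ℓ (w x) - c| ∂ν ≤
      ‖ℓ‖ * ∫ x, ‖f n x - w x‖ ∂ν + ∫ x, |ℓ (f n x) - c| ∂ν := by
    have hdiff : Integrable (fun x ↦ ‖ℓ‖ * ‖f n x - w x‖) ν :=
      ((hf n).sub hw).norm.const_mul ‖ℓ‖
    rw [← integral_const_mul, ← integral_add hdiff (hint (hf n))]
    refine integral_mono (hint hw) (hdiff.add (hint (hf n))) fun x ↦
      (abs_sub_le _ (ℓ (f n x)) _).trans (add_le_add_left ?_ _)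
    rw [abs_sub_comm, ← map_sub]
    exact ℓ.le_opNorm _
  have hzero : ∫ x, |ℓ (w x) - c| ∂ν ≤ 0 :=
    ge_of_tendsto' (by simpa using (hfw.const_mul ‖ℓ‖).add hℓ) hle
  have := (integral_eq_zero_iff_of_nonneg (fun x ↦ abs_nonneg _) (hint hw)).1
    (hzero.antisymm (integral_nonneg fun x ↦ abs_nonneg _))
  exact this.mono fun x hx ↦ sub_eq_zero.1 (abs_eq_zero.1 hx)

variable {G X : Type*} [Group G] [MulAction G X] {l : ℕ} {U : Fin l → Set X} {F : Finset G}
  {N : ℕ} {Φ : X → Fin N} {τ : Fin N → G → Fin l}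

lemma tileAverage_single_apply (x : X) (j : Fin l) :
    tileAverage F Φ (fun i s ↦ EuclideanSpace.single (τ i s) (1 : ℝ)) x j =
      (F.card : ℝ)⁻¹ * ∑ s ∈ F, if j = τ (Φ (s⁻¹ • x)) s then 1 else 0 := by
  simp [tileAverage, Pi.single_apply]

lemma tileAverage_single_mem_stdSimplex (hF : F.Nonempty) (x : X) :
    ⇑(tileAverage F Φ (fun i s ↦ EuclideanSpace.single (τ i s) (1 : ℝ)) x) ∈
      stdSimplex ℝ (Fin l) := by
  have hF₀ : (F.card : ℝ) ≠ 0 := Nat.cast_ne_zero.2 hF.card_ne_zero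
  refine ⟨fun j ↦ ?_, ?_⟩
  · rw [tileAverage_single_apply]
    positivity
  · simp only [tileAverage_single_apply]
    rw [← Finset.mul_sum, Finset.sum_comm]
    simp [hF₀]

variable [MeasurableSpace X] {μ : Measure X} {ε ε' : ℝ}

variable (G U μ) in
/-- The measurable maps into the standard simplex whose `j`-th coordinate has integral at most `ε`
on `U j` and that have codes of rate and error `ε`. -/
def avoidingApprox (ε : ℝ) : Set (X → EuclideanSpace ℝ (Fin l)) :=
  {f | Measurable f ∧ (∀ x, ⇑(f x) ∈ stdSimplex ℝ (Fin l)) ∧ (∀ j, ∫ x in U j, f x j ∂μ ≤ ε) ∧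
    ApproxCode G μ f ε ε}

lemma avoidingApprox_mono (h : ε ≤ ε') : avoidingApprox G U μ ε ⊆ avoidingApprox G U μ ε' :=
  fun _ ⟨hf, hsimplex, hU, hcode⟩ ↦ ⟨hf, hsimplex, fun j ↦ (hU j).trans h, hcode.mono h h⟩

variable [IsProbabilityMeasure μ]

lemma integrable_of_mem_avoidingApprox {f : X → EuclideanSpace ℝ (Fin l)}
    (hf : f ∈ avoidingApprox G U μ ε) : Integrable f μ :=
  .of_bound hf.1.aestronglyMeasurable 1 <| .of_forall fun x ↦
    norm_le_one_of_mem_stdSimplex (hf.2.1 x)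

variable [MeasurableConstSMul G X] [SMulInvariantMeasure G X μ]

lemma setIntegral_tileAverage_le (hUm : ∀ j, MeasurableSet (U j)) (hF : F.Nonempty) {D : Set X}
    (hD : MeasurableSet D) (hμD : 1 - ε ≤ μ.real D)
    (hav : ∀ x ∈ D, ∀ s ∈ F, s • x ∉ U (τ (Φ x) s)) (j : Fin l) :
    ∫ x in U j, tileAverage F Φ (fun i s ↦ EuclideanSpace.single (τ i s) (1 : ℝ)) x j ∂μ ≤ ε := by
  have : (F.card : ℝ) ≠ 0 := Nat.cast_ne_zero.2 hF.card_ne_zero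
  let e : X → ℝ := Dᶜ.indicator 1
  have he₀ (x : X) : 0 ≤ e x := indicator_nonneg (fun _ _ ↦ zero_le_one) x
  have he (s : G) : Integrable (fun x ↦ e (s⁻¹ • x)) μ :=
    integrable_comp_const_smul ((integrable_const 1).indicator hD.compl) s⁻¹
  have he' (s : G) : ∫ x, e (s⁻¹ • x) ∂μ ≤ ε := by
    rw [(measurePreserving_smul s⁻¹ μ).integral_comp (measurableEmbedding_const_smul s⁻¹),
      integral_indicator_one hD.compl, probReal_compl_eq_one_sub hD]
    linarith
  have hle (x) (hx : x ∈ U j) (s) (hs : s ∈ F) :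
      (if j = τ (Φ (s⁻¹ • x)) s then (1 : ℝ) else 0) ≤ e (s⁻¹ • x) := by
    split_ifs with h
    · have hxD : s⁻¹ • x ∈ Dᶜ := fun hxD ↦ hav _ hxD s hs (by rwa [smul_inv_smul, ← h])
      simp [e, hxD]
    · exact he₀ _
  simp only [tileAverage_single_apply]
  calc ∫ x in U j, (F.card : ℝ)⁻¹ * ∑ s ∈ F, (if j = τ (Φ (s⁻¹ • x)) s then 1 else 0) ∂μ
      ≤ ∫ x in U j, (F.card : ℝ)⁻¹ * ∑ s ∈ F, e (s⁻¹ • x) ∂μ := by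
        refine integral_mono_of_nonneg (.of_forall fun x ↦ by positivity)
          ((integrable_finsetSum _ fun s _ ↦ he s).const_mul _).integrableOn ?_
        filter_upwards [ae_restrict_mem (hUm j)] with x hx
        gcongr with s hs
        exact hle x hx s hs
    _ ≤ ∫ x, (F.card : ℝ)⁻¹ * ∑ s ∈ F, e (s⁻¹ • x) ∂μ :=
        setIntegral_le_integral ((integrable_finsetSum _ fun s _ ↦ he s).const_mul _)
          (.of_forall fun x ↦ mul_nonneg (by positivity) (Finset.sum_nonneg fun s _ ↦ he₀ _))
    _ ≤ ε := by
        rw [integral_const_mul, integral_finsetSum _ fun s _ ↦ he s,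
          inv_mul_le_iff₀ (by positivity)]
        exact (Finset.sum_le_card_nsmul F _ ε fun s _ ↦ he' s).trans_eq (nsmul_eq_mul _ _)

lemma midpoint_mem_avoidingApprox {f g : X → EuclideanSpace ℝ (Fin l)} (hε : 0 ≤ ε)
    (hf : f ∈ avoidingApprox G U μ (ε * 2⁻¹)) (hg : g ∈ avoidingApprox G U μ (ε * 2⁻¹)) :
    (2⁻¹ : ℝ) • (f + g) ∈ avoidingApprox G U μ ε := by
  have hfi := integrable_of_mem_avoidingApprox hf
  have hgi := integrable_of_mem_avoidingApprox hg
  refine ⟨(hf.1.add hg.1).const_smul _, fun x ↦ ?_, fun j ↦ ?_, ?_⟩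
  · have := convex_stdSimplex ℝ (Fin l) (hf.2.1 x) (hg.2.1 x) (by norm_num) (by norm_num)
      (add_halves (1 : ℝ))
    simpa [smul_add] using this
  · have hcoord {h : X → EuclideanSpace ℝ (Fin l)} (hh : Integrable h μ) :
        IntegrableOn (fun x ↦ h x j) (U j) μ :=
      ((EuclideanSpace.proj (𝕜 := ℝ) j).integrable_comp hh).integrableOn
    have hfj := hf.2.2.1 j
    have hgj := hg.2.2.1 j
    simp only [Pi.smul_apply, Pi.add_apply, PiLp.smul_apply, PiLp.add_apply, smul_eq_mul]
    rw [integral_const_mul, integral_add (hcoord hfi) (hcoord hgi)]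
    linarith
  · exact (hf.2.2.2.midpoint hfi hgi hg.2.2.2).mono (by linarith) (by linarith)

lemma avoidingApprox_nonempty (hamen : FolnerAmenable G) (hl : 2 ≤ l)
    (hUm : ∀ j, MeasurableSet (U j)) (hUd : Pairwise fun i j ↦ Disjoint (U i) (U j))
    (hU : ¬ 0 < upperIndepDens G μ U) (hε : 0 < ε) : (avoidingApprox G U μ ε).Nonempty := by
  let c := ε / ((ε / 2)⁻¹ ^ 2 + 1)
  have hc : 0 < c := by positivity
  obtain ⟨F, hF, D, hD, hμD, N, Φ, τ, hΦ, hN, hav⟩ := exists_avoiding_code (μ := μ)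
    (δ := min ε 2⁻¹) hamen hl hUm hUd hU (by positivity) (by norm_num) hc
  refine ⟨_, ?_, tileAverage_single_mem_stdSimplex hF, fun j ↦
    (setIntegral_tileAverage_le hUm hF hD hμD hav j).trans (min_le_left _ _), ?_⟩
  · refine (Finset.measurable_fun_sum F fun s _ ↦ ?_).const_smul (F.card : ℝ)⁻¹
    exact (measurable_of_countable fun i ↦ EuclideanSpace.single (τ i s) (1 : ℝ)).comp
      (hΦ.comp (measurable_const_smul s⁻¹))
  · refine (approxCode_tileAverage hF hΦ (fun i s ↦ by simp) hc.le hN (half_pos hε)).mono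
      (by linarith) (le_of_eq ?_)
    simp only [c]
    field_simp

lemma exists_ae_partitionOfUnity_approxCode (hamen : FolnerAmenable G) (hl : 2 ≤ l)
    (hUm : ∀ j, MeasurableSet (U j)) (hUd : Pairwise fun i j ↦ Disjoint (U i) (U j))
    (hU : ¬ 0 < upperIndepDens G μ U) :
    ∃ w : X → EuclideanSpace ℝ (Fin l), Measurable w ∧ Integrable w μ ∧
      (∀ᵐ x ∂μ, ∑ j, w x j = 1 ∧ ∀ j, x ∈ U j → w x j = 0) ∧ ∀ ε > 0, ApproxCode G μ w ε ε := by
  have hpow : Tendsto (fun n : ℕ ↦ (2⁻¹ : ℝ) ^ n) atTop (𝓝 0) :=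
    tendsto_pow_atTop_nhds_zero_of_lt_one (by norm_num) (by norm_num)
  obtain ⟨f, hf, w, hwm, hwi, hfw⟩ := exists_tendsto_integral_norm_sub_of_midpoint_mem (μ := μ)
    (C := fun n ↦ avoidingApprox G U μ (2⁻¹ ^ n)) (R := 1)
    (fun n m hnm ↦ avoidingApprox_mono (pow_le_pow_of_le_one (by norm_num) (by norm_num) hnm))
    (fun n ↦ avoidingApprox_nonempty hamen hl hUm hUd hU (by positivity))
    (fun f hf ↦ hf.1.aestronglyMeasurable)
    (fun f hf x ↦ norm_le_one_of_mem_stdSimplex (hf.2.1 x))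
    (fun n f hf g hg ↦ midpoint_mem_avoidingApprox (by positivity)
      (pow_succ (2⁻¹ : ℝ) n ▸ hf) (pow_succ (2⁻¹ : ℝ) n ▸ hg))
  have hfi n := integrable_of_mem_avoidingApprox (hf n)
  have hsum : ∀ᵐ x ∂μ, ∑ j, w x j = 1 := by
    have := ae_apply_eq_of_tendsto_integral hfi hwi hfw
      (∑ j, EuclideanSpace.proj (𝕜 := ℝ) j) (c := 1) (by simp [((hf _).2.1 _).2])
    simpa using this
  have hzero (j) : ∀ᵐ x ∂μ, x ∈ U j → w x j = 0 := by
    refine (ae_restrict_iff' (hUm j)).1 <| ae_apply_eq_of_tendsto_integral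
      (fun n ↦ (hfi n).restrict) hwi.restrict (squeeze_zero (fun n ↦ by positivity)
        (fun n ↦ setIntegral_le_integral ((hfi n).sub hwi).norm (.of_forall fun x ↦ by positivity))
        hfw) (EuclideanSpace.proj (𝕜 := ℝ) j) (c := 0) ?_
    refine squeeze_zero (fun n ↦ by positivity) (fun n ↦ ?_) hpow
    simpa [abs_of_nonneg (((hf n).2.1 _).1 j)] using (hf n).2.2.1 j
  refine ⟨w, hwm.measurable, hwi, hsum.and (ae_all_iff.2 hzero), fun ε hε ↦ ?_⟩
  obtain ⟨n, hn, hn'⟩ := ((hpow.eventually_lt_const (half_pos hε)).and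
    (hfw.eventually_lt_const (half_pos hε))).exists
  simp_rw [norm_sub_rev (f n _)] at hn'
  exact ((hf n).2.2.2.of_integral_norm_sub_le hwi (hfi n) hn'.le).mono (by linarith) (by linarith)

lemma exists_partitionOfUnity_approxCode (hamen : FolnerAmenable G) (hl : 2 ≤ l)
    (hUm : ∀ j, MeasurableSet (U j)) (hUd : Pairwise fun i j ↦ Disjoint (U i) (U j))
    (hU : ¬ 0 < upperIndepDens G μ U) :
    ∃ w : X → EuclideanSpace ℝ (Fin l), Measurable w ∧ Integrable w μ ∧ (∀ x, ∑ j, w x j = 1) ∧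
      (∀ j, ∀ x ∈ U j, w x j = 0) ∧ ∀ ε > 0, ApproxCode G μ w ε ε := by
  obtain ⟨w, hwm, hwi, hw, hcode⟩ := exists_ae_partitionOfUnity_approxCode hamen hl hUm hUd hU
  obtain ⟨S, hS, hSm, hSw⟩ := hw.exists_measurable_mem
  let i₀ : Fin l := ⟨0, by omega⟩
  let i₁ : Fin l := ⟨1, by omega⟩
  let v : X → EuclideanSpace ℝ (Fin l) :=
    fun x ↦ EuclideanSpace.single (if x ∈ U i₀ then i₁ else i₀) 1
  have hv : Measurable v :=
    (measurable_of_countable fun i : Fin l ↦ EuclideanSpace.single i (1 : ℝ)).comp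
      (measurable_const.ite (hUm i₀) measurable_const)
  have hvU (j) (x) (hx : x ∈ U j) : v x j = 0 := by
    have hj : j ≠ if x ∈ U i₀ then i₁ else i₀ := by
      rintro rfl
      split_ifs at hx with h
      · exact Set.disjoint_left.1 (hUd (by simp [i₀, i₁])) h hx
      · exact h hx
    simp [v, hj]
  have hae : S.piecewise w v =ᵐ[μ] w := mem_of_superset hS fun x hx ↦ S.piecewise_eq_of_mem _ _ hx
  have hint : Integrable (S.piecewise w v) μ := hwi.congr hae.symm
  refine ⟨S.piecewise w v, hwm.piecewise hSm hv, hint, fun x ↦ ?_, fun j x hx ↦ ?_, fun ε hε ↦ ?_⟩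
  · by_cases hxS : x ∈ S
    · simpa [hxS] using (hSw x hxS).1
    · simp [hxS, v]
  · by_cases hxS : x ∈ S
    · simpa [hxS] using (hSw x hxS).2 j hx
    · simpa [hxS] using hvU j x hx
  · simpa using (hcode ε hε).of_integral_norm_sub_le hint hwi (η := 0)
      (integral_eq_zero_of_ae (hae.mono fun x hx ↦ by simp [hx])).le

end PartitionOfUnity

section ZeroEntropyPartition

open Filter Topology

section UnstableSet

variable {V ι : Type*} [PseudoMetricSpace V] {Ψ : V → ι} {γ γ' : ℝ}

/-- The points within distance `γ` of a point with a different label under `Ψ`. -/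
def unstableSet (Ψ : V → ι) (γ : ℝ) : Set V :=
  {v | ∃ u, dist u v < γ ∧ Ψ u ≠ Ψ v}

lemma unstableSet_mono (h : γ ≤ γ') : unstableSet Ψ γ ⊆ unstableSet Ψ γ' :=
  fun _ ⟨u, hu, hne⟩ ↦ ⟨u, hu.trans_le h, hne⟩

lemma isOpen_unstableSet : IsOpen (unstableSet Ψ γ) := by
  refine isOpen_iff_mem_nhds.2 fun v ⟨u, hu, hne⟩ ↦ ?_
  filter_upwards [Metric.isOpen_ball.mem_nhds (Metric.mem_ball_self (dist_nonneg.trans_lt hu)),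
    Metric.isOpen_ball.mem_nhds (Metric.mem_ball.2 ((dist_comm v u).trans_lt hu))] with v' hv hu'
  by_cases h : Ψ u = Ψ v'
  · exact ⟨v, (dist_comm v v').trans_lt hv, fun h' ↦ hne (h.trans h'.symm)⟩
  · exact ⟨u, (dist_comm u v').trans_lt hu', h⟩

lemma tendsto_measureReal_preimage_unstableSet [MeasurableSpace V] [OpensMeasurableSpace V]
    {X : Type*} [MeasurableSpace X] {μ : Measure X} [IsFiniteMeasure μ] {w : X → V}
    (hw : Measurable w) (h : ∀ᵐ x ∂μ, ∀ᶠ u in 𝓝 (w x), Ψ u = Ψ (w x)) :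
    Tendsto (fun γ ↦ μ.real (w ⁻¹' unstableSet Ψ γ)) (𝓝[>] 0) (𝓝 0) := by
  have hnull : μ (⋂ γ > 0, w ⁻¹' unstableSet Ψ γ) = 0 := by
    refine measure_mono_null (fun x hx ↦ ?_) (ae_iff.1 h)
    rintro (hstable : ∀ᶠ u in 𝓝 (w x), Ψ u = Ψ (w x))
    obtain ⟨γ, hγ, hball⟩ := Metric.eventually_nhds_iff.1 hstable
    obtain ⟨u, hu, hne⟩ := mem_iInter₂.1 hx γ hγ
    exact hne (hball hu)
  have := tendsto_measure_biInter_gt (μ := μ) (a := (0 : ℝ))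
    (fun γ _ ↦ (hw (isOpen_unstableSet (Ψ := Ψ) (γ := γ)).measurableSet).nullMeasurableSet)
    (fun _ _ _ h ↦ preimage_mono (unstableSet_mono h)) ⟨1, one_pos, measure_ne_top _ _⟩
  rw [hnull] at this
  exact (ENNReal.tendsto_toReal ENNReal.zero_ne_top).comp this

end UnstableSet

lemma measureReal_label_ne_le {X V ι : Type*} [MeasurableSpace X] {μ : Measure X}
    [IsFiniteMeasure μ] [NormedAddCommGroup V] {Ψ : V → ι} {f g : X → V} {γ : ℝ}
    (hfg : Integrable (fun x ↦ f x - g x) μ) (hγ : 0 < γ) :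
    μ.real {x | Ψ (f x) ≠ Ψ (g x)} ≤
      μ.real (f ⁻¹' unstableSet Ψ γ) + (∫ x, ‖f x - g x‖ ∂μ) / γ := by
  have hsub : {x | Ψ (f x) ≠ Ψ (g x)} ⊆ f ⁻¹' unstableSet Ψ γ ∪ {x | γ ≤ ‖f x - g x‖} := by
    refine fun x hx ↦ or_iff_not_imp_right.2 fun hγx ↦ ⟨g x, ?_, Ne.symm hx⟩
    rw [dist_comm, dist_eq_norm]
    exact not_le.1 hγx
  refine (measureReal_mono hsub).trans ((measureReal_union_le _ _).trans ?_)
  gcongr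
  rw [le_div_iff₀' hγ]
  exact mul_meas_ge_le_integral_of_nonneg (.of_forall fun x ↦ norm_nonneg _) hfg.norm γ

variable {G X : Type*} [Group G] [MulAction G X] [MeasurableSpace X] [MeasurableConstSMul G X]
  {μ : Measure X} [IsProbabilityMeasure μ] [SMulInvariantMeasure G X μ]

section Labelling

variable {V : Type*} [NormedAddCommGroup V] [MeasurableSpace V] [OpensMeasurableSpace V] {r : ℕ}
  {Ψ : V → Fin r} {w : X → V} {ε c γ β : ℝ}

lemma sum_measureReal_label_ne_le (hwm : Measurable w) (hwi : Integrable w μ) (hγ : 0 < γ)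
    {E : Finset G} {N : ℕ} {Φ : X → Fin N} (hΦ : Measurable Φ) {τ : Fin N → G → V}
    (herr : codeError μ w E Φ τ ≤ ε * E.card) :
    ∑ t ∈ E, μ.real {x | Ψ (w (t • x)) ≠ Ψ (τ (Φ x) t)} ≤
      (μ.real (w ⁻¹' unstableSet Ψ γ) + ε / γ) * E.card := by
  have hunstable (t : G) : μ.real ((fun x ↦ w (t • x)) ⁻¹' unstableSet Ψ γ) =
      μ.real (w ⁻¹' unstableSet Ψ γ) :=
    (measurePreserving_smul t μ).measureReal_preimage
      (hwm isOpen_unstableSet.measurableSet).nullMeasurableSet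
  calc ∑ t ∈ E, μ.real {x | Ψ (w (t • x)) ≠ Ψ (τ (Φ x) t)}
      ≤ ∑ t ∈ E, (μ.real (w ⁻¹' unstableSet Ψ γ) +
          (∫ x, ‖w (t • x) - τ (Φ x) t‖ ∂μ) / γ) :=
        Finset.sum_le_sum fun t _ ↦ hunstable t ▸
          measureReal_label_ne_le (integrable_smul_sub_comp hwi t hΦ (τ · t)) hγ
    _ = μ.real (w ⁻¹' unstableSet Ψ γ) * E.card + codeError μ w E Φ τ / γ := by
        rw [Finset.sum_add_distrib, Finset.sum_const, nsmul_eq_mul, mul_comm, codeError,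
          Finset.sum_div]
    _ ≤ (μ.real (w ⁻¹' unstableSet Ψ γ) + ε / γ) * E.card := by
        rw [add_mul, div_mul_eq_mul_div]
        gcongr

lemma ApproxCode.invLimsup_HJoin_le (h : ApproxCode G μ w ε c) (hwm : Measurable w)
    (hwi : Integrable w μ) (hΨ : Measurable Ψ) (hε : 0 ≤ ε) (hc : 0 ≤ c) (hγ : 0 < γ)
    (hβ : β ∈ Ioo 0 1) :
    invLimsup (fun E : Finset G ↦ HJoin μ (fun i ↦ (Ψ ∘ w) ⁻¹' {i}) E) ≤
      c - Real.log (1 - β) +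
        Real.log (r / β) * (μ.real (w ⁻¹' unstableSet Ψ γ) + ε / γ) := by
  obtain ⟨x₀⟩ : Nonempty X := nonempty_of_isProbabilityMeasure μ
  have hr : (1 : ℝ) ≤ r := Nat.one_le_cast.2 (Fin.pos (Ψ (w x₀)))
  have hlog : 0 ≤ Real.log (r / β) :=
    Real.log_nonneg ((one_le_div hβ.1).2 (hβ.2.le.trans hr))
  have hlogβ : Real.log (1 - β) ≤ 0 :=
    Real.log_nonpos (sub_nonneg.2 hβ.2.le) (sub_le_self 1 hβ.1.le)
  refine invLimsup_le_of_eventually (HJoin_nonneg _)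
    (add_nonneg (by linarith) (mul_nonneg hlog (by positivity))) ?_
  filter_upwards [h] with E ⟨N, Φ, τ, hΦ, hN, herr⟩
  have hN₀ : (0 : ℝ) < N := Nat.cast_pos.2 (Fin.pos (Φ x₀))
  calc HJoin μ (fun i ↦ (Ψ ∘ w) ⁻¹' {i}) E
      ≤ Real.log N + E.card * -Real.log (1 - β) + Real.log (r / β) *
          ∑ t ∈ E, μ.real {x | Ψ (w (t • x)) ≠ Ψ (τ (Φ x) t)} :=
        HJoin_le_of_code (hΨ.comp hwm) E hΦ (fun i t ↦ Ψ (τ i t)) hβ.1 hβ.2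
    _ ≤ c * E.card + E.card * -Real.log (1 - β) + Real.log (r / β) *
          ((μ.real (w ⁻¹' unstableSet Ψ γ) + ε / γ) * E.card) := by
        gcongr
        · exact (Real.log_le_iff_le_exp hN₀).2 hN
        · exact sum_measureReal_label_ne_le hwm hwi hγ hΦ herr
    _ = _ := by ring

lemma invLimsup_HJoin_nonpos_of_approxCode (hcode : ∀ ε > 0, ApproxCode G μ w ε ε)
    (hwm : Measurable w) (hwi : Integrable w μ) (hΨ : Measurable Ψ)
    (hstable : ∀ᵐ x ∂μ, ∀ᶠ u in 𝓝 (w x), Ψ u = Ψ (w x)) :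
    invLimsup (fun E : Finset G ↦ HJoin μ (fun i ↦ (Ψ ∘ w) ⁻¹' {i}) E) ≤ 0 := by
  have hε {β} (hβ : β ∈ Ioo (0 : ℝ) 1) {γ} (hγ : γ ∈ Ioi 0) :
      invLimsup (fun E : Finset G ↦ HJoin μ (fun i ↦ (Ψ ∘ w) ⁻¹' {i}) E) ≤
        -Real.log (1 - β) + Real.log (r / β) * μ.real (w ⁻¹' unstableSet Ψ γ) := by
    refine ge_of_tendsto (x := 𝓝[>] 0) (Tendsto.mono_left ?_ nhdsWithin_le_nhds)
      (eventually_mem_nhdsWithin.mono fun ε hε ↦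
        (hcode ε hε).invLimsup_HJoin_le hwm hwi hΨ hε.out.le hε.out.le hγ hβ)
    exact Continuous.tendsto' (by fun_prop) _ _ (by simp)
  have hγ {β} (hβ : β ∈ Ioo (0 : ℝ) 1) :
      invLimsup (fun E : Finset G ↦ HJoin μ (fun i ↦ (Ψ ∘ w) ⁻¹' {i}) E) ≤
        -Real.log (1 - β) := by
    refine ge_of_tendsto (x := 𝓝[>] 0) ?_ (eventually_mem_nhdsWithin.mono fun γ hγ ↦ hε hβ hγ)
    simpa using ((tendsto_measureReal_preimage_unstableSet hwm hstable).const_mul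
      (Real.log (r / β))).const_add (-Real.log (1 - β))
  refine ge_of_tendsto (x := 𝓝[>] 0) (Tendsto.mono_left ?_ nhdsWithin_le_nhds)
    (eventually_of_mem (Ioo_mem_nhdsGT one_pos) fun β hβ ↦ hγ hβ)
  have : ContinuousAt (fun β : ℝ ↦ -Real.log (1 - β)) 0 := by fun_prop (disch := norm_num)
  simpa using this.tendsto

end Labelling

lemma eventually_setOf_lt_apply_eq {ι : Type*} [Finite ι] {a : ℝ} {v : EuclideanSpace ℝ ι}
    (hv : ∀ j, v j ≠ a) : ∀ᶠ u in 𝓝 v, {j | a < u j} = {j | a < v j} := by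
  have hj (j) : ∀ᶠ u : EuclideanSpace ℝ ι in 𝓝 v, (a < u j ↔ a < v j) := by
    have hcont : Tendsto (fun u : EuclideanSpace ℝ ι ↦ u j) (𝓝 v) (𝓝 (v j)) :=
      Continuous.tendsto (by fun_prop) v
    rcases (hv j).lt_or_gt with h | h
    · exact (hcont.eventually_lt_const h).mono fun u hu ↦ iff_of_false hu.not_gt h.not_gt
    · exact (hcont.eventually_const_lt h).mono fun u hu ↦ iff_of_true hu h
  exact (eventually_all.2 hj).mono fun u hu ↦ Set.ext hu

lemma exists_ae_ne_of_measurable {X ι : Type*} [Countable ι] [MeasurableSpace X] {μ : Measure X}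
    [SFinite μ] {f : ι → X → ℝ} (hf : ∀ j, Measurable (f j)) {b b' : ℝ} (hb : b < b') :
    ∃ a ∈ Ioo b b', ∀ᵐ x ∂μ, ∀ j, f j x ≠ a := by
  obtain ⟨a, ha, hab⟩ := ((countable_iUnion fun j ↦
    Measure.countable_meas_level_set_pos (μ := μ) (hf j)).dense_compl ℝ).exists_between hb
  refine ⟨a, hab, ae_all_iff.2 fun j ↦ ?_⟩
  simp only [mem_compl_iff, mem_iUnion, mem_ofPred_eq, not_exists, not_lt, nonpos_iff_eq_zero]
    at ha
  simpa [ae_iff] using ha j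

lemma exists_partition_invLimsup_HJoin_nonpos {l : ℕ} {U : Fin l → Set X}
    (hamen : FolnerAmenable G) (hl : 2 ≤ l) (hUm : ∀ j, MeasurableSet (U j))
    (hUd : Pairwise fun i j ↦ Disjoint (U i) (U j)) (hU : ¬ 0 < upperIndepDens G μ U) :
    ∃ P : Fin l → Set X, IsMeasPartition P ∧ (∀ a, ∃ j, P a ⊆ (U j)ᶜ) ∧
      invLimsup (fun F : Finset G ↦ HJoin μ P F) ≤ 0 := by
  obtain ⟨w, hwm, hwi, hsum, hzero, hcode⟩ :=
    exists_partitionOfUnity_approxCode hamen hl hUm hUd hU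
  have hl₀ : (0 : ℝ) < l := Nat.cast_pos.2 (by omega)
  have hcoord (j : Fin l) : Measurable fun v : EuclideanSpace ℝ (Fin l) ↦ v j := by fun_prop
  obtain ⟨a, ⟨ha₀, ha₁⟩, hne⟩ := exists_ae_ne_of_measurable (μ := μ)
    (fun j ↦ (hcoord j).comp hwm) (inv_pos.2 hl₀)
  have : Nonempty (Fin l) := ⟨⟨0, by omega⟩⟩
  let Ψ (v : EuclideanSpace ℝ (Fin l)) : Fin l := Classical.epsilon (· ∈ {j | a < v j})
  have hΨ : Measurable Ψ := measurable_comp_setOf_mem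
    (fun j ↦ measurableSet_lt measurable_const (hcoord j)) fun S ↦ Classical.epsilon (· ∈ S)
  have hlt (x) : a < w x (Ψ (w x)) := by
    have hex : ∃ j, a < w x j := by
      by_contra! hle
      have := (hsum x).symm.trans_le (Finset.sum_le_card_nsmul _ _ a fun j _ ↦ hle j)
      rw [Finset.card_univ, Fintype.card_fin, nsmul_eq_mul, ← inv_le_iff_one_le_mul₀' hl₀] at this
      exact ha₁.not_ge this
    exact Classical.epsilon_spec hex
  refine ⟨fun i ↦ (Ψ ∘ w) ⁻¹' {i}, isMeasPartition_of_labelling (hΨ.comp hwm), fun i ↦ ⟨i, ?_⟩,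
    invLimsup_HJoin_nonpos_of_approxCode hcode hwm hwi hΨ (hne.mono fun x hx ↦ ?_)⟩
  · rintro x rfl hxU
    exact (ha₀.trans (hlt x)).ne' (hzero _ x hxU)
  · exact (eventually_setOf_lt_apply_eq hx).mono fun u hu ↦ by simp only [Ψ, hu]

end ZeroEntropyPartition

section Tuples

lemma two_le_of_range_eq {X ι : Type*} {l : ℕ} {z : Fin l → X} {x : ι → X}
    (hz : range z = range x) (hx : ∃ i j, x i ≠ x j) : 2 ≤ l := by
  obtain ⟨i, j, hij⟩ := hx
  obtain ⟨a, ha⟩ : x i ∈ range z := hz ▸ mem_range_self i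
  obtain ⟨b, hb⟩ : x j ∈ range z := hz ▸ mem_range_self j
  have hab : a ≠ b := fun h ↦ hij (ha.symm.trans (h ▸ hb))
  have := Fin.val_ne_of_ne hab
  omega

lemma exists_enumeration_range {X ι : Type*} [Finite ι] (x : ι → X) :
    ∃ (l : ℕ) (z : Fin l → X) (m : ι → Fin l),
      Function.Injective z ∧ range z = range x ∧ ∀ i, z (m i) = x i := by
  let e := Finite.equivFin (range x)
  exact ⟨_, fun j ↦ e.symm j, fun i ↦ e ⟨x i, mem_range_self i⟩,
    Subtype.val_injective.comp e.symm.injective,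
    (e.symm.surjective.range_comp _).trans Subtype.range_coe,
    fun i ↦ congrArg Subtype.val (e.symm_apply_apply _)⟩

lemma exists_pairwise_disjoint_isOpen {X ι κ : Type*} [TopologicalSpace X] [T2Space X] [Finite ι]
    [Finite κ] {z : κ → X} (hz : Function.Injective z) (m : ι → κ) {V : ι → Set X}
    (hV : ∀ i, V i ∈ nhds (z (m i))) :
    ∃ U : κ → Set X, (∀ j, IsOpen (U j)) ∧ (∀ j, z j ∈ U j) ∧
      (Pairwise fun i j ↦ Disjoint (U i) (U j)) ∧ ∀ i, U (m i) ⊆ V i := by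
  obtain ⟨W, hW, hWd⟩ := (finite_range z).t2_separation
  refine ⟨fun j ↦ W (z j) ∩ ⋂ i, ⋂ (_ : m i = j), interior (V i), fun j ↦ ?_, fun j ↦ ?_,
    fun i j hij ↦ ?_, fun i y hy ↦ interior_subset (mem_iInter₂.1 hy.2 i rfl)⟩
  · exact (hW _).2.inter (isOpen_iInter_of_finite fun i ↦ isOpen_iInter_of_finite fun _ ↦
      isOpen_interior)
  · refine ⟨(hW _).1, mem_iInter₂.2 ?_⟩
    rintro i rfl
    exact mem_interior_iff_mem_nhds.2 (hV i)
  · exact (hWd (mem_range_self i) (mem_range_self j) (hz.ne hij)).mono inter_subset_left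
      inter_subset_left

variable {G X : Type*} [Group G] [TopologicalSpace X] [MulAction G X] [MeasurableSpace X]
  [MeasurableConstSMul G X] {μ : Measure X} [IsProbabilityMeasure μ] {k : ℕ} {x : Fin k → X}

lemma IsMuIETuple.muEntropyTupleProp (hx : IsMuIETuple G μ x) (hnd : ∃ i j, x i ≠ x j) :
    MuEntropyTupleProp G μ x := by
  intro l z U hz hzx hU _ _ r P hP hPU
  have hmem_z (j) : ∃ i, x i = z j := mem_range.1 (hzx ▸ mem_range_self j)
  have hmem_x (i) : ∃ j, z j = x i := mem_range.1 (hzx.symm ▸ mem_range_self i)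
  choose g hg using hmem_z
  choose m hm using hmem_x
  have hmg (j) : m (g j) = j := hz ((hm _).trans (hg j))
  have hpos : 0 < upperIndepDens G μ (U ∘ m) := hx _ fun i ↦ hm i ▸ hU (m i)
  exact invLimsup_HJoin_pos_of_upperIndepDens_pos (two_le_of_range_eq hzx hnd)
    (upperIndepDens_pos_of_subset_comp g (fun j ↦ (congrArg U (hmg j)).subset) hpos) hP hPU

lemma MuEntropyTupleProp.isMuIETuple [T2Space X] [OpensMeasurableSpace X]
    [SMulInvariantMeasure G X μ] (hamen : FolnerAmenable G) (hx : MuEntropyTupleProp G μ x)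
    (hnd : ∃ i j, x i ≠ x j) : IsMuIETuple G μ x := by
  intro V hV
  obtain ⟨l, z, m, hz, hzx, hm⟩ := exists_enumeration_range x
  obtain ⟨U, hUo, hzU, hUd, hUV⟩ :=
    exists_pairwise_disjoint_isOpen hz m fun i ↦ (hm i).symm ▸ hV i
  refine upperIndepDens_pos_of_subset_comp m hUV ?_
  by_contra hU
  obtain ⟨P, hP, hPU, hP₀⟩ := exists_partition_invLimsup_HJoin_nonpos hamen
    (two_le_of_range_eq hzx hnd) (fun j ↦ (hUo j).measurableSet) hUd hU
  exact hP₀.not_gt (hx l z U hz hzx (fun j ↦ (hUo j).mem_nhds (hzU j))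
    (fun j ↦ (hUo j).measurableSet) hUd l P hP hPU)

end Tuples

theorem stmt11_general {G X : Type*} [Group G] [TopologicalSpace X] [T2Space X] [MulAction G X]
    [MeasurableSpace X] [OpensMeasurableSpace X] [MeasurableConstSMul G X]
    (hamen : FolnerAmenable G) (μ : Measure X) [IsProbabilityMeasure μ]
    [SMulInvariantMeasure G X μ] {k : ℕ} {x : Fin k → X} (hnd : ∃ i j, x i ≠ x j) :
    IsMuIETuple G μ x ↔ MuEntropyTupleProp G μ x :=
  ⟨fun hx ↦ hx.muEntropyTupleProp hnd, fun hx ↦ hx.isMuIETuple hamen hnd⟩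

/-- Theorem: for `k ≥ 2`, a nondiagonal tuple is a `μ`-IE-tuple if and only if it is a
`μ`-entropy tuple. -/
theorem stmt11 {G X : Type*} [Group G] [TopologicalSpace X] [CompactSpace X] [T2Space X]
    [MulAction G X] [ContinuousConstSMul G X] [MeasurableSpace X] [BorelSpace X]
    (hamen : FolnerAmenable G)
    (μ : Measure X) [IsProbabilityMeasure μ] (hinv : InvariantMeasure G μ)
    (k : ℕ) (hk : 2 ≤ k) (x : Fin k → X) (hnd : ∃ i j, x i ≠ x j) :
    IsMuIETuple G μ x ↔ MuEntropyTupleProp G μ x := by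
  have : SMulInvariantMeasure G X μ := ⟨fun s B hB ↦ hinv s B hB⟩
  exact stmt11_general hamen μ hnd
end

section
/- There exists a constant c > 0 (depending on nothing) such that whenever I is a finite index set and A_{i,1}, A_{i,2}, B_i (for i ∈ I) are subsets of a given set such that the collection of pairs {(A_{i,1} ∪ A_{i,2}, B_i) : i ∈ I} is independent, there are a subset J ⊆ I with |J| ≥ c|I| and a j ∈ {1,2} such that the collection {(A_{i,j}, B_i) : i ∈ J} is independent. -/
/-- The collection of pairs `(C i, D i)` for `i` in the index set `S` is independent:
for every finite `T ⊆ S` and every choice `σ` of one member of each pair, the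
corresponding intersection is nonempty. -/
def IndepPairs {ι α : Type*} (C D : ι → Set α) (S : Set ι) : Prop :=
  ∀ T : Finset ι, (T : Set ι) ⊆ S → ∀ σ : ι → Bool,
    (⋂ i ∈ T, cond (σ i) (C i) (D i)).Nonempty

/-! Call `s ⊆ I` a pattern if some point lies in `C i` for `i ∈ s` and in `D i` for `i ∈ I \ s`;
independence over `I` means that every subset of `I` is a pattern. Let `C i = ⋃ j, A i j` with `j`
in a finite type `κ`, and let a point realizing the pattern `s` choose for each `i ∈ s` a colour
`j` with the point in `A i j`. A uniformly random colouring `g : I → κ` agrees with the choice made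
on `s` with probability `|κ| ^ (-|s|)`, so on average at least `(1 + 1 / |κ|) ^ |I|` sets `s` are
patterns of the pairs `(A i (g i), B i)`. By the Sauer–Shelah lemma an exponentially large family of
subsets of `I` shatters a subset `S` of size proportional to `|I|`, and over a shattered set the
pairs are independent. The most frequent colour of `g` on `S` gives `J`.
-/

open Finset

section Shatter

variable {ι : Type*} [DecidableEq ι] {I : Finset ι} {𝒜 : Finset (Finset ι)}

theorem subset_of_shatters_of_subset_powerset {S : Finset ι} (hS : 𝒜.Shatters S)
    (h𝒜 : 𝒜 ⊆ I.powerset) : S ⊆ I := by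
  obtain ⟨s, hs, hSs⟩ := hS.exists_superset
  exact hSs.trans (mem_powerset.1 (h𝒜 hs))

theorem exists_shatters_card_eq_vcDim (h𝒜 : 𝒜.Nonempty) : ∃ S, 𝒜.Shatters S ∧ #S = 𝒜.vcDim := by
  obtain ⟨S, hS, hcard⟩ :=
    exists_mem_eq_sup 𝒜.shatterer ⟨∅, mem_shatterer.2 (shatters_empty.2 h𝒜)⟩ card
  exact ⟨S, mem_shatterer.1 hS, hcard.symm⟩

-- Weighting each shattered set `S` by `t ^ #S` lets the binomial theorem replace an estimate of
-- partial sums of binomial coefficients.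
theorem card_mul_pow_vcDim_le (h𝒜 : 𝒜 ⊆ I.powerset) {t : ℝ} (ht₀ : 0 ≤ t) (ht₁ : t ≤ 1) :
    #𝒜 * t ^ 𝒜.vcDim ≤ (1 + t) ^ #I :=
  calc #𝒜 * t ^ 𝒜.vcDim
      ≤ #𝒜.shatterer * t ^ 𝒜.vcDim := by
        gcongr ?_ * _
        exact_mod_cast card_le_card_shatterer 𝒜
    _ = ∑ _S ∈ 𝒜.shatterer, t ^ 𝒜.vcDim := by rw [sum_const, nsmul_eq_mul]
    _ ≤ ∑ S ∈ 𝒜.shatterer, t ^ #S :=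
        sum_le_sum fun S hS ↦ pow_le_pow_of_le_one ht₀ ht₁ (mem_shatterer.1 hS).card_le_vcDim
    _ ≤ ∑ S ∈ I.powerset, t ^ #S :=
        sum_le_sum_of_subset_of_nonneg
          (fun S hS ↦ mem_powerset.2 <|
            subset_of_shatters_of_subset_powerset (mem_shatterer.1 hS) h𝒜)
          fun S _ _ ↦ pow_nonneg ht₀ _
    _ = (1 + t) ^ #I := by simpa [add_comm] using sum_pow_mul_eq_add_pow t 1 I

end Shatter

theorem exists_pos_mul_card_le_vcDim {a : ℝ} (ha : 1 < a) :
    ∃ c : ℝ, 0 < c ∧ ∀ (ι : Type*) [DecidableEq ι] (I : Finset ι) (𝒜 : Finset (Finset ι)),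
      𝒜 ⊆ I.powerset → a ^ #I ≤ #𝒜 → c * #I ≤ 𝒜.vcDim := by
  obtain ⟨t, ht₀, ht⟩ : ∃ t, 0 < t ∧ t < min 1 (a - 1) := exists_between (by simpa using ha)
  obtain ⟨ht₁, hta⟩ := lt_min_iff.1 ht
  have hb : 1 < a / (1 + t) := (one_lt_div (by positivity)).2 (by linarith)
  have hlog_t : 0 < Real.log t⁻¹ := Real.log_pos ((one_lt_inv₀ ht₀).2 ht₁)
  refine ⟨Real.log (a / (1 + t)) / Real.log t⁻¹, div_pos (Real.log_pos hb) hlog_t,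
    fun ι _ I 𝒜 h𝒜 hcard ↦ ?_⟩
  have hpow : (a / (1 + t)) ^ #I ≤ t⁻¹ ^ 𝒜.vcDim := by
    rw [div_pow, inv_pow, ← one_div, div_le_div_iff₀ (by positivity) (by positivity), one_mul]
    calc a ^ #I * t ^ 𝒜.vcDim ≤ #𝒜 * t ^ 𝒜.vcDim := by gcongr
      _ ≤ (1 + t) ^ #I := card_mul_pow_vcDim_le h𝒜 ht₀.le ht₁.le
  have hlog := Real.log_le_log (by positivity) hpow
  rw [Real.log_pow, Real.log_pow] at hlog
  rw [div_mul_eq_mul_div, div_le_iff₀ hlog_t]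
  linarith

section Coloring

variable {ι κ : Type*} [Fintype κ] [DecidableEq κ]

theorem card_filter_forall_mem_eq [DecidableEq ι] (I s : Finset ι) (f : ι → κ) :
    #{g : I → κ | ∀ i : I, ↑i ∈ s → g i = f i} = Fintype.card κ ^ #(I \ s) := by
  have hpi : ({g : I → κ | ∀ i : I, ↑i ∈ s → g i = f i} : Finset (I → κ)) =
      Fintype.piFinset fun i : I ↦ if ↑i ∈ s then {f i} else univ := by
    ext g
    simp only [mem_filter_univ, Fintype.mem_piFinset]
    exact forall_congr' fun i ↦ by split_ifs with hi <;> simp [hi]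
  calc #{g : I → κ | ∀ i : I, ↑i ∈ s → g i = f i}
      = ∏ i : I, if ↑i ∈ s then 1 else Fintype.card κ := by
        rw [hpi, Fintype.card_piFinset]
        exact prod_congr rfl fun i _ ↦ by split_ifs <;> simp
    _ = ∏ i ∈ I, if i ∈ s then 1 else Fintype.card κ :=
        prod_coe_sort I fun i ↦ if i ∈ s then 1 else Fintype.card κ
    _ = Fintype.card κ ^ #(I \ s) := by
        rw [prod_ite, prod_const_one, one_mul, prod_const, filter_notMem_eq_sdiff]

theorem sum_card_filter_forall_mem_eq [DecidableEq ι] (I : Finset ι) (f : Finset ι → ι → κ) :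
    ∑ g : I → κ, #{s ∈ I.powerset | ∀ i : I, ↑i ∈ s → g i = f s i} =
      (1 + Fintype.card κ) ^ #I :=
  calc ∑ g : I → κ, #{s ∈ I.powerset | ∀ i : I, ↑i ∈ s → g i = f s i}
      = ∑ s ∈ I.powerset, #{g : I → κ | ∀ i : I, ↑i ∈ s → g i = f s i} := by
        simp only [card_filter]
        exact sum_comm
    _ = ∑ s ∈ I.powerset, 1 ^ #s * Fintype.card κ ^ (#I - #s) :=
        sum_congr rfl fun s hs ↦ by
          rw [card_filter_forall_mem_eq, card_sdiff_of_subset (mem_powerset.1 hs), one_pow, one_mul]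
    _ = (1 + Fintype.card κ) ^ #I := sum_pow_mul_eq_add_pow 1 _ I

theorem exists_pow_card_le_card_filter_forall_mem_eq [Nonempty κ] (I : Finset ι)
    (f : Finset ι → ι → κ) :
    ∃ g : ι → κ,
      (1 + (Fintype.card κ : ℝ)⁻¹) ^ #I ≤ #{s ∈ I.powerset | ∀ i ∈ s, g i = f s i} := by
  classical
  have havg : ∑ _g : I → κ, (1 + (Fintype.card κ : ℝ)⁻¹) ^ #I ≤
      ∑ g : I → κ, (#{s ∈ I.powerset | ∀ i : I, ↑i ∈ s → g i = f s i} : ℝ) := by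
    rw [← Nat.cast_sum, sum_card_filter_forall_mem_eq, sum_const, card_univ, Fintype.card_fun,
      Fintype.card_coe, nsmul_eq_mul, Nat.cast_pow, ← mul_pow, mul_add, mul_one,
      mul_inv_cancel₀ (Nat.cast_ne_zero.2 Fintype.card_ne_zero)]
    push_cast
    rw [add_comm]
  obtain ⟨g', -, hg'⟩ := exists_le_of_sum_le univ_nonempty havg
  obtain ⟨g, rfl⟩ := Subtype.val_injective.surjective_comp_right g'
  refine ⟨g, hg'.trans ?_⟩
  gcongr with s hs
  exact fun h i hi ↦ h ⟨i, mem_powerset.1 hs hi⟩ hi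

end Coloring

section Pattern

variable {ι α : Type*} {C D : ι → Set α} {I : Finset ι}

/-- The set `s` is the trace on `I` of a point `x` of the ground set with respect to the pairs
`(C i, D i)`: for `i ∈ I`, the point `x` lies in `C i` if `i ∈ s` and in `D i` if `i ∉ s`. Patterns
turn independence into a statement about families of finite sets. As `C i` and `D i` may overlap,
one point can realize several patterns. -/
def IsPattern (C D : ι → Set α) (I s : Finset ι) : Prop :=
  ∃ x, ∀ i ∈ I, (i ∈ s → x ∈ C i) ∧ (i ∉ s → x ∈ D i)

theorem IsPattern.mono {S s : Finset ι} (h : IsPattern C D I s) (hS : S ⊆ I) :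
    IsPattern C D S s :=
  h.imp fun _ hx i hi ↦ hx i (hS hi)

theorem indepPairs_coe_iff_forall_isPattern :
    IndepPairs C D (I : Set ι) ↔ ∀ s ⊆ I, IsPattern C D I s := by
  classical
  constructor
  · intro h s _
    obtain ⟨x, hx⟩ := h I subset_rfl fun i ↦ decide (i ∈ s)
    refine ⟨x, fun i hi ↦ ?_⟩
    have hxi := Set.mem_iInter₂.1 hx i hi
    constructor <;> intro his <;> simpa [his] using hxi
  · intro h T hT σ
    obtain ⟨x, hx⟩ := h {i ∈ I | σ i} (filter_subset _ _)
    refine ⟨x, Set.mem_iInter₂.2 fun i hi ↦ ?_⟩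
    obtain ⟨hC, hD⟩ := hx i (hT hi)
    cases hσ : σ i
    · exact hD (by simp [hσ])
    · exact hC (mem_filter.2 ⟨hT hi, hσ⟩)

theorem IndepPairs.mono {C' D' : ι → Set α} {S S' : Set ι} (h : IndepPairs C D S) (hS : S' ⊆ S)
    (hC : ∀ i ∈ S', C i ⊆ C' i) (hD : ∀ i ∈ S', D i ⊆ D' i) : IndepPairs C' D' S' := by
  intro T hT σ
  refine (h T (hT.trans hS) σ).mono (Set.iInter₂_mono fun i hi ↦ ?_)
  cases σ i
  · exact hD i (hT hi)
  · exact hC i (hT hi)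

theorem indepPairs_of_shatters [DecidableEq ι] {𝒜 : Finset (Finset ι)} {S : Finset ι}
    (hS : 𝒜.Shatters S) (h : ∀ s ∈ 𝒜, IsPattern C D S s) : IndepPairs C D (S : Set ι) := by
  refine indepPairs_coe_iff_forall_isPattern.2 fun s hs ↦ ?_
  obtain ⟨u, hu, rfl⟩ := hS hs
  obtain ⟨x, hx⟩ := h u hu
  exact ⟨x, fun i hi ↦ by simpa [hi] using hx i hi⟩

theorem IndepPairs.exists_isPattern_selection {κ : Type*} [Fintype κ] [Nonempty κ]
    {A : ι → κ → Set α} (h : IndepPairs (fun i ↦ ⋃ j, A i j) D (I : Set ι)) :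
    ∃ (g : ι → κ) (𝒜 : Finset (Finset ι)), 𝒜 ⊆ I.powerset ∧
      (1 + (Fintype.card κ : ℝ)⁻¹) ^ #I ≤ #𝒜 ∧
      ∀ s ∈ 𝒜, IsPattern (fun i ↦ A i (g i)) D I s := by
  classical
  have hcolor : ∀ s ⊆ I, ∃ f : ι → κ, IsPattern (fun i ↦ A i (f i)) D I s := by
    intro s hs
    obtain ⟨x, hx⟩ := indepPairs_coe_iff_forall_isPattern.1 h s hs
    have hmem : ∀ i, ∃ j, i ∈ s → x ∈ A i j := fun i ↦ by
      by_cases hi : i ∈ s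
      · exact (Set.mem_iUnion.1 ((hx i (hs hi)).1 hi)).imp fun _ hj _ ↦ hj
      · exact ⟨Classical.arbitrary κ, fun his ↦ absurd his hi⟩
    choose f hf using hmem
    exact ⟨f, x, fun i hi ↦ ⟨hf i, (hx i hi).2⟩⟩
  choose! f hf using hcolor
  obtain ⟨g, hg⟩ := exists_pow_card_le_card_filter_forall_mem_eq I f
  refine ⟨g, _, filter_subset _ _, hg, fun s hs ↦ ?_⟩
  obtain ⟨hsI, hgf⟩ := mem_filter.1 hs
  obtain ⟨x, hx⟩ := hf s (mem_powerset.1 hsI)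
  exact ⟨x, fun i hi ↦ ⟨fun his ↦ by simpa only [hgf i his] using (hx i hi).1 his, (hx i hi).2⟩⟩

end Pattern

theorem exists_indepPairs_selection (κ : Type*) [Finite κ] [Nonempty κ] :
    ∃ c : ℝ, 0 < c ∧
      ∀ (α ι : Type*) (A : ι → κ → Set α) (B : ι → Set α) (I : Finset ι),
        IndepPairs (fun i ↦ ⋃ j, A i j) B (I : Set ι) →
        ∃ (g : ι → κ) (S : Finset ι), S ⊆ I ∧ c * #I ≤ #S ∧
          IndepPairs (fun i ↦ A i (g i)) B (S : Set ι) := by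
  classical
  cases nonempty_fintype κ
  have hbase : 1 < 1 + (Fintype.card κ : ℝ)⁻¹ := lt_add_of_pos_right 1 (by positivity)
  obtain ⟨c, hc, hvc⟩ := exists_pos_mul_card_le_vcDim hbase
  refine ⟨c, hc, fun α ι A B I h ↦ ?_⟩
  obtain ⟨g, 𝒜, h𝒜, hcard, hpattern⟩ := h.exists_isPattern_selection
  have hne : 𝒜.Nonempty := by
    rw [← card_pos, ← Nat.cast_pos (α := ℝ)]
    exact lt_of_lt_of_le (by positivity) hcard
  obtain ⟨S, hS, hSdim⟩ := exists_shatters_card_eq_vcDim hne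
  have hSI := subset_of_shatters_of_subset_powerset hS h𝒜
  exact ⟨g, S, hSI, hSdim ▸ hvc ι I 𝒜 h𝒜 hcard,
    indepPairs_of_shatters hS fun s hs ↦ (hpattern s hs).mono hSI⟩

theorem stmt14_general (κ : Type*) [Finite κ] [Nonempty κ] :
    ∃ c : ℝ, 0 < c ∧
      ∀ (α ι : Type*) (A : ι → κ → Set α) (B : ι → Set α) (I : Finset ι),
        IndepPairs (fun i ↦ ⋃ j, A i j) B (I : Set ι) →
        ∃ (J : Finset ι) (j : κ), J ⊆ I ∧ c * #I ≤ #J ∧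
          IndepPairs (fun i ↦ A i j) B (J : Set ι) := by
  classical
  cases nonempty_fintype κ
  obtain ⟨c, hc, hselect⟩ := exists_indepPairs_selection κ
  refine ⟨c / Fintype.card κ, by positivity, fun α ι A B I h ↦ ?_⟩
  obtain ⟨g, S, hSI, hScard, hS⟩ := hselect α ι A B I h
  have hκ : Fintype.card κ • (c / Fintype.card κ * #I) ≤ (#S : ℝ) := by
    rw [nsmul_eq_mul, ← mul_assoc, mul_div_cancel₀ _ (by positivity)]
    exact hScard
  obtain ⟨j, -, hj⟩ := exists_le_card_fiber_of_nsmul_le_card_of_maps_to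
    (fun i _ ↦ mem_univ (g i)) univ_nonempty hκ
  have hJS : {i ∈ S | g i = j} ⊆ S := filter_subset _ _
  refine ⟨_, j, hJS.trans hSI, hj, hS.mono (coe_subset.2 hJS) (fun i hi ↦ ?_) fun _ _ ↦ subset_rfl⟩
  rw [(mem_filter.1 (mem_coe.1 hi)).2]

theorem iUnion_fin_two {α : Type*} (s : Fin 2 → Set α) : ⋃ j, s j = s 0 ∪ s 1 := by
  ext
  simp only [Set.mem_iUnion, Fin.exists_fin_two, Set.mem_union]

/-- Lemma: there is a universal constant `c > 0` such that if the pairs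
`(A_{i,1} ∪ A_{i,2}, B_i)` for `i ∈ I` are independent, then for some `j ∈ {1,2}` the
pairs `(A_{i,j}, B_i)` are independent over a subset `J ⊆ I` with `|J| ≥ c|I|`. -/
theorem stmt14 :
    ∃ c : ℝ, 0 < c ∧
      ∀ (α ι : Type) (A : ι → Fin 2 → Set α) (B : ι → Set α) (I : Finset ι),
        IndepPairs (fun i => A i 0 ∪ A i 1) B (↑I : Set ι) →
        ∃ (J : Finset ι) (j : Fin 2), J ⊆ I ∧ c * (I.card : ℝ) ≤ (J.card : ℝ) ∧
          IndepPairs (fun i => A i j) B (↑J : Set ι) := by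
  simpa only [iUnion_fin_two] using stmt14_general (Fin 2)
end
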